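/- arXiv:2111.04809 — 2 statements merged into one kernel-verified Lean document; each statement's English description precedes it below -/
import Mathlib

section
/- Let Δ ≥ 2 be an integer and let 𝒢 ⊆ 𝒢_Δ be a family of graphs of maximum degree at most Δ that is closed under taking induced subgraphs. Suppose there exist λ* > 0 and ε > 0 such that for every G ∈ 𝒢 and every λ ∈ 𝒩([0,λ*), ε) one has Z_G(λ) ≠ 0. Then for every λ ∈ (0, λ*] there exist constants r > 1 and C > 0 (depending only on Δ, λ*, ε, λ) such that the hard-core measure at λ satisfies strong spatial mixing on 𝒢 with exponential rate r and constant C. -/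
open Finset

noncomputable section

namespace HardCore

open scoped Classical

variable {V : Type*}

/-- `s` is an independent set in the graph `G`. -/
def IsInd (G : SimpleGraph V) (s : Finset V) : Prop :=
  ∀ u ∈ s, ∀ w ∈ s, ¬ G.Adj u w

/-- The independence polynomial of the subgraph of `G` induced on the vertex set `A`,
evaluated at `lam`:  `Z_{G[A]}(lam) = ∑_{I ⊆ A independent} lam^{|I|}`. -/
def Z (R : Type*) [Field R] [Fintype V] (G : SimpleGraph V) (A : Finset V) (lam : R) : R :=
  ∑ s ∈ A.powerset, if IsInd G s then lam ^ s.card else 0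

/-- The closed neighbourhood `N[v]` of a vertex `v` as a `Finset`. -/
def closedNbhd [Fintype V] (G : SimpleGraph V) (v : V) : Finset V :=
  univ.filter fun u => u = v ∨ G.Adj v u

/-- The ratio `P_{G[A],v}(lam) = lam * Z_{G[A] ∖ N[v]}(lam) / Z_{G[A]}(lam)` for the
subgraph of `G` induced on `A`. -/
def ratio {R : Type*} [Field R] [Fintype V] (G : SimpleGraph V) (A : Finset V) (v : V)
    (lam : R) : R :=
  lam * Z R G (A \ closedNbhd G v) lam / Z R G A lam

/-- `σ` is a valid boundary condition on `Λ`: the set of vertices of `Λ` set to `1`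
is independent in the subgraph of `G` induced by `Λ`. -/
def IsBC (G : SimpleGraph V) (Λ : Finset V) (σ : V → Bool) : Prop :=
  ∀ u ∈ Λ, ∀ w ∈ Λ, σ u = true → σ w = true → ¬ G.Adj u w

/-- An independent set `s` is compatible with the boundary condition `σ` on `Λ`:
`σ⁻¹(1) ⊆ s` and `σ⁻¹(0) ∩ s = ∅`. -/
def Compat (Λ : Finset V) (σ : V → Bool) (s : Finset V) : Prop :=
  ∀ u ∈ Λ, (u ∈ s ↔ σ u = true)

/-- The conditional probability `Pr_μ[v ∈ I ∣ σ]` that `v` belongs to the random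
independent set drawn from the hard-core measure at `lam`, conditioned on the
boundary condition `σ` on `Λ`. -/
def condProb [Fintype V] (G : SimpleGraph V) (lam : ℝ) (Λ : Finset V) (σ : V → Bool)
    (v : V) : ℝ :=
  (∑ s : Finset V, if IsInd G s ∧ Compat Λ σ s ∧ v ∈ s then lam ^ s.card else 0) /
  (∑ s : Finset V, if IsInd G s ∧ Compat Λ σ s then lam ^ s.card else 0)

/-- The hard-core measure on `G` at activity `lam` satisfies the strong spatial mixing
bound with constant `C` and exponential rate `r`:  for every vertex `v`, every
`Λ ⊆ V ∖ {v}` and any two boundary conditions `σ, τ` on `Λ`,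
`|Pr[v ∈ I ∣ σ] − Pr[v ∈ I ∣ τ]| ≤ C ⬝ r^{−d_G(v, σ ≠ τ)}`.
(The distance `d_G(v, σ ≠ τ)` is encoded by quantifying over all `d : ℕ` that are a
lower bound, in `ℕ∞`, for the distance from `v` to every vertex at which `σ, τ` differ.) -/
def SSM [Fintype V] (G : SimpleGraph V) (lam : ℝ) (C r : ℝ) : Prop :=
  ∀ (v : V) (Λ : Finset V), v ∉ Λ → ∀ σ τ : V → Bool, IsBC G Λ σ → IsBC G Λ τ →
    ∀ d : ℕ, (∀ u ∈ Λ, σ u ≠ τ u → (d : ℕ∞) ≤ G.edist v u) →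
      |condProb G lam Λ σ v - condProb G lam Λ τ v| ≤ C * r ^ (-(d : ℤ))

/-- `G` has maximum degree at most `Δ`. -/
def MaxDegLE [Fintype V] (G : SimpleGraph V) (Δ : ℕ) : Prop :=
  ∀ v : V, (univ.filter fun u => G.Adj v u).card ≤ Δ

/-- The vertex set of the graph `G[σ]`, i.e. the vertices of `V ∖ Λ` that are not
adjacent to any vertex of `Λ` that is set to `1` by `σ`. -/
def goodSet [Fintype V] (G : SimpleGraph V) (Λ : Finset V) (σ : V → Bool) : Finset V :=
  (univ \ Λ).filter fun u => ∀ w ∈ Λ, σ w = true → ¬ G.Adj w u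

end HardCore

namespace HardCore

/-- Vertices of a graph in a family: elements of a finite subset of `ℕ`. -/
abbrev Vtx (s : Finset ℕ) : Type := {x : ℕ // x ∈ s}

/-- The subgraph of `G` induced on a subset `t ⊆ s` of its vertices. -/
def inducedSub {s t : Finset ℕ} (h : t ⊆ s) (G : SimpleGraph (Vtx s)) : SimpleGraph (Vtx t) :=
  G.comap fun x => ⟨x.1, h x.2⟩

/-- The family `𝒢` of graphs is closed under taking induced subgraphs. -/
def ClosedUnderInduced (𝒢 : ∀ s : Finset ℕ, SimpleGraph (Vtx s) → Prop) : Prop :=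
  ∀ s G, 𝒢 s G → ∀ (t : Finset ℕ) (h : t ⊆ s), 𝒢 t (inducedSub h G)

end HardCore

namespace HardCore

/-! The conditional probability that `v` is unoccupied is a ratio `Z(A ∖ v) / Z(A)`, where `A`
consists of the vertices left undetermined by the boundary condition. As a function of the activity
`z`, this ratio is holomorphic near `[0, λ]` and omits the values `0` and `1` except at `z = 0`,
while on the real axis it lies in `[0, 1]`. Schottky's theorem therefore bounds it near `[0, λ]`
uniformly over all graphs; close to `z = 0`, where the value `1` is attained, the recursion
`Z(A ∖ v) / Z(A) = 1 / (1 + z * Z(A ∖ N[v]) / Z(A ∖ v))` bounds it by `2`.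

By the same recursion, two such ratios whose vertex sets agree on the ball of radius `n` around `v`
differ by `O(z ^ n)` at `z = 0`. Transporting this bounded difference to the unit disc by a
holomorphic map into the neighbourhood of `[0, λ]` that fixes `0` and attains `λ`, the Schwarz lemma
turns vanishing to order `n` at `0` into an exponentially small value at `λ`. -/

section ComplexAnalysis

open Metric Filter Topology

lemma differentiableAt_of_exp_comp {f g : ℂ → ℂ} {z₀ : ℂ} (hg : ContinuousAt g z₀)
    (hf : DifferentiableAt ℂ f z₀) (hgf : ∀ᶠ z in 𝓝 z₀, Complex.exp (g z) = f z) :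
    DifferentiableAt ℂ g z₀ := by
  have hf₀ : f z₀ ≠ 0 := hgf.self_of_nhds ▸ Complex.exp_ne_zero _
  have hlog : g =ᶠ[𝓝 z₀] fun z => g z₀ + Complex.log (f z / f z₀) := by
    have hnear : ∀ᶠ z in 𝓝 z₀, dist (g z) (g z₀) < Real.pi :=
      hg.eventually (ball_mem_nhds _ Real.pi_pos)
    filter_upwards [hgf, hnear] with z hz hdist
    rw [dist_eq_norm] at hdist
    have him := abs_lt.1 ((Complex.abs_im_le_norm _).trans_lt hdist)
    rw [← hz, ← hgf.self_of_nhds, ← Complex.exp_sub, Complex.log_exp him.1 him.2.le]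
    ring
  refine DifferentiableAt.congr_of_eventuallyEq ?_ hlog
  exact ((hf.div_const _).clog (by simp [hf₀])).const_add _

lemma exists_differentiableOn_exp_eq {U : Set ℂ} (hU : IsSimplyConnected U) (hUo : IsOpen U)
    {f : ℂ → ℂ} (hf : DifferentiableOn ℂ f U) (h0 : ∀ z ∈ U, f z ≠ 0) :
    ∃ g : ℂ → ℂ, DifferentiableOn ℂ g U ∧ ∀ z ∈ U, Complex.exp (g z) = f z := by
  obtain ⟨g, hgc, hgf⟩ := Complex.exists_continuousOn_eqOn_exp_comp hU hUo hf.continuousOn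
    (by rintro ⟨z, hz, hfz⟩; exact h0 z hz hfz)
  refine ⟨g, fun z hz => ?_, hgf⟩
  have hUz := hUo.mem_nhds hz
  exact (differentiableAt_of_exp_comp (hgc.continuousAt hUz) (hf.differentiableAt hUz)
    (eventually_of_mem hUz hgf)).differentiableWithinAt

/-- Solving `cos w = f z` amounts to `exp (I * w) = f z + I * √(1 - f z ^ 2)`, and the right-hand
side never vanishes. -/
lemma exists_differentiableOn_cos_pi_mul_eq {U : Set ℂ} (hU : IsSimplyConnected U) (hUo : IsOpen U)
    {f : ℂ → ℂ} (hf : DifferentiableOn ℂ f U) (h1 : ∀ z ∈ U, f z ≠ 1) (h2 : ∀ z ∈ U, f z ≠ -1) :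
    ∃ F : ℂ → ℂ, DifferentiableOn ℂ F U ∧ ∀ z ∈ U, Complex.cos (Real.pi * F z) = f z := by
  obtain ⟨u, hu, hexp_u⟩ := exists_differentiableOn_exp_eq (f := fun z => 1 - f z ^ 2) hU hUo
    (by fun_prop) fun z hz => sub_ne_zero.2 (sq_ne_one_iff.2 ⟨h1 z hz, h2 z hz⟩).symm
  have hsqrt : ∀ z ∈ U, Complex.exp (u z / 2) ^ 2 = 1 - f z ^ 2 := fun z hz => by
    rw [← hexp_u z hz, ← Complex.exp_nat_mul, Nat.cast_ofNat, mul_div_cancel₀ _ two_ne_zero]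
  have hprod : ∀ z ∈ U, (f z + Complex.I * Complex.exp (u z / 2)) *
      (f z - Complex.I * Complex.exp (u z / 2)) = 1 := fun z hz => by
    linear_combination hsqrt z hz - Complex.exp (u z / 2) ^ 2 * Complex.I_sq
  obtain ⟨w, hw, hexp_w⟩ := exists_differentiableOn_exp_eq
    (f := fun z => f z + Complex.I * Complex.exp (u z / 2)) hU hUo (by fun_prop)
    fun z hz => left_ne_zero_of_mul_eq_one (hprod z hz)
  refine ⟨fun z => -Complex.I * w z / Real.pi, by fun_prop, fun z hz => ?_⟩
  have hpi : (Real.pi : ℂ) ≠ 0 := mod_cast Real.pi_ne_zero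
  have hmulI : (Real.pi : ℂ) * (-Complex.I * w z / Real.pi) * Complex.I = w z := by
    field_simp
    linear_combination -w z * Complex.I_sq
  rw [Complex.cos, neg_mul, hmulI, Complex.exp_neg, hexp_w z hz,
    inv_eq_of_mul_eq_one_right (hprod z hz)]
  ring

lemma im_eq_zero_of_cos_eq_ofReal {w : ℂ} {x : ℝ} (hx : x ∈ Set.Icc (-1) 1)
    (h : Complex.cos w = x) : w.im = 0 := by
  rw [← Real.cos_arccos hx.1 hx.2, Complex.ofReal_cos, eq_comm, Complex.cos_eq_cos_iff] at h
  obtain ⟨k, rfl | rfl⟩ := h <;> simp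

lemma norm_cos_le_exp_abs_im (w : ℂ) : ‖Complex.cos w‖ ≤ Real.exp |w.im| := by
  have hpos : ‖Complex.exp (w * Complex.I)‖ ≤ Real.exp |w.im| := by
    simpa [Complex.norm_exp] using neg_le_abs w.im
  have hneg : ‖Complex.exp (-w * Complex.I)‖ ≤ Real.exp |w.im| := by
    simpa [Complex.norm_exp] using le_abs_self w.im
  rw [Complex.cos, norm_div, Complex.norm_ofNat, div_le_iff₀ two_pos]
  linarith [norm_add_le (Complex.exp (w * Complex.I)) (Complex.exp (-w * Complex.I))]

/-- The branch is normalised at `c` by subtracting an even integer. -/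
lemma exists_differentiableOn_cos_pi_mul_eq_of_mem_Icc {U : Set ℂ} (hU : IsSimplyConnected U)
    (hUo : IsOpen U) {f : ℂ → ℂ} (hf : DifferentiableOn ℂ f U) (h1 : ∀ z ∈ U, f z ≠ 1)
    (h2 : ∀ z ∈ U, f z ≠ -1) {c : ℂ} (hc : c ∈ U) {x : ℝ} (hx : x ∈ Set.Icc (-1) 1)
    (hfc : f c = x) :
    ∃ F : ℂ → ℂ, DifferentiableOn ℂ F U ∧ (∀ z ∈ U, Complex.cos (Real.pi * F z) = f z) ∧
      ∃ y ∈ Set.Icc (-1 : ℝ) 1, F c = y := by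
  obtain ⟨F, hF, hcos⟩ := exists_differentiableOn_cos_pi_mul_eq hU hUo hf h1 h2
  have him : (F c).im = 0 := by
    simpa [Real.pi_ne_zero] using im_eq_zero_of_cos_eq_ofReal hx ((hcos c hc).trans hfc)
  set k : ℤ := round ((F c).re / 2)
  refine ⟨fun z => F z - 2 * k, hF.sub_const _, fun z hz => ?_, (F c).re - 2 * k, ?_, ?_⟩
  · rw [← hcos z hz, mul_sub, show (Real.pi : ℂ) * (2 * k) = k * (2 * Real.pi) by ring,
      Complex.cos_sub_int_mul_two_pi]
  · obtain ⟨hlo, hhi⟩ := abs_le.1 (abs_sub_round ((F c).re / 2))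
    constructor <;> linarith
  · apply Complex.ext <;> simp [him]

lemma exists_cosh_pi_mul_eq_natCast {t : ℝ} (ht : 0 ≤ t) :
    ∃ s ∈ Set.Icc t (t + 1), ∃ n : ℕ, Real.cosh (Real.pi * s) = n := by
  have hgap : Real.cosh (Real.pi * t) + 1 ≤ Real.cosh (Real.pi * (t + 1)) := by
    have hpi : 2 ≤ Real.cosh Real.pi := by
      rw [Real.cosh_eq]
      linarith [Real.add_one_le_exp Real.pi, Real.exp_pos (-Real.pi), Real.pi_gt_three]
    rw [mul_add, mul_one, Real.cosh_add]
    nlinarith [Real.one_le_cosh (Real.pi * t), mul_nonneg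
      (Real.sinh_nonneg_iff.2 (mul_nonneg Real.pi_nonneg ht))
      (Real.sinh_nonneg_iff.2 Real.pi_nonneg)]
  have hcont : ContinuousOn (fun s => Real.cosh (Real.pi * s)) (Set.Icc t (t + 1)) :=
    (Real.continuous_cosh.comp (continuous_const_mul _)).continuousOn
  obtain ⟨s, hs, hsn⟩ := intermediate_value_Icc (by linarith) hcont
    ⟨Nat.le_ceil _, (Nat.ceil_lt_add_one (Real.cosh_pos _).le).le.trans hgap⟩
  exact ⟨s, hs, _, hsn⟩

lemma exists_abs_sub_le_one_cosh_pi_mul_eq_natCast (t : ℝ) :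
    ∃ s, |s - t| ≤ 1 ∧ ∃ n : ℕ, Real.cosh (Real.pi * s) = n := by
  rcases le_total 0 t with ht | ht
  · obtain ⟨s, hs, hn⟩ := exists_cosh_pi_mul_eq_natCast ht
    exact ⟨s, abs_le.2 ⟨by linarith [hs.1], by linarith [hs.2]⟩, hn⟩
  · obtain ⟨s, hs, n, hn⟩ := exists_cosh_pi_mul_eq_natCast (neg_nonneg.2 ht)
    exact ⟨-s, abs_le.2 ⟨by linarith [hs.2], by linarith [hs.1]⟩, n,
      by rwa [mul_neg, Real.cosh_neg]⟩

lemma cos_pi_mul_intCast_add_mul_I (m : ℤ) (s : ℝ) :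
    Complex.cos (Real.pi * (m + s * Complex.I)) = m.negOnePow * Real.cosh (Real.pi * s) := by
  rw [show (Real.pi : ℂ) * (m + s * Complex.I) = (Real.pi * s : ℝ) * Complex.I + m * Real.pi by
      push_cast; ring,
    Complex.cos_antiperiodic.add_int_mul_eq, Complex.cos_mul_I, Complex.ofReal_cosh]

lemma exists_dist_lt_three_cos_pi_mul_eq_intCast (w : ℂ) :
    ∃ a : ℂ, dist a w < 3 ∧ ∃ n : ℤ, Complex.cos (Real.pi * a) = n := by
  obtain ⟨s, hs, n, hn⟩ := exists_abs_sub_le_one_cosh_pi_mul_eq_natCast w.im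
  refine ⟨round w.re + s * Complex.I, ?_, (round w.re).negOnePow * n, ?_⟩
  · have hre : |round w.re - w.re| ≤ 1 / 2 := abs_sub_comm w.re _ ▸ abs_sub_round w.re
    calc dist (round w.re + s * Complex.I) w ≤ |round w.re - w.re| + |s - w.im| := by
          simpa [dist_eq_norm] using
            Complex.norm_le_abs_re_add_abs_im (round w.re + s * Complex.I - w)
      _ < 3 := by linarith
  · rw [cos_pi_mul_intCast_add_mul_I, hn]
    push_cast
    rfl

end ComplexAnalysis

section LandauBlochSchottky

open Metric Filter Topology

/-- Once the factor `r - dist z c` of Landau's argument has been maximised, `deriv f` is at most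
twice its value at the maximum point `a`; the Schwarz lemma then controls its variation. -/
lemma norm_sub_sub_deriv_mul_le {f : ℂ → ℂ} {a : ℂ} {s : ℝ} (hf : DifferentiableOn ℂ f (ball a s))
    (hbound : ∀ z ∈ ball a s, ‖deriv f z‖ ≤ 2 * ‖deriv f a‖) {z : ℂ}
    (hz : z ∈ closedBall a (s / 6)) (hs : 0 < s) :
    ‖f z - f a - deriv f a * (z - a)‖ ≤ ‖deriv f a‖ / 2 * ‖z - a‖ := by
  have hsmall : closedBall a (s / 6) ⊆ ball a s := closedBall_subset_ball (by linarith)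
  have hmaps : Set.MapsTo (deriv f) (ball a s) (closedBall (deriv f a) (3 * ‖deriv f a‖)) :=
    fun w hw => mem_closedBall_iff_norm.2 <| by
      linarith [norm_sub_le (deriv f w) (deriv f a), hbound w hw]
  have hderiv : ∀ w ∈ closedBall a (s / 6), ‖deriv f w - deriv f a‖ ≤ ‖deriv f a‖ / 2 :=
    fun w hw => calc
      ‖deriv f w - deriv f a‖ ≤ 3 * ‖deriv f a‖ / s * dist w a := by
        rw [← dist_eq_norm]
        exact Complex.dist_le_div_mul_dist_of_mapsTo_ball (hf.deriv isOpen_ball) hmaps (hsmall hw)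
      _ ≤ 3 * ‖deriv f a‖ / s * (s / 6) := by gcongr; exact hw
      _ = ‖deriv f a‖ / 2 := by field_simp; ring
  have hderivWithin : ∀ w ∈ closedBall a (s / 6), HasDerivWithinAt
      (fun w => f w - deriv f a * w) (deriv f w - deriv f a) (closedBall a (s / 6)) w :=
    fun w hw => by
      have hfw := (hf.differentiableAt (isOpen_ball.mem_nhds (hsmall hw))).hasDerivAt
      simpa using (hfw.fun_sub ((hasDerivAt_id w).const_mul (deriv f a))).hasDerivWithinAt
  have := (convex_closedBall a (s / 6)).norm_image_sub_le_of_norm_hasDerivWithin_le hderivWithin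
    hderiv (mem_closedBall_self (by positivity)) hz
  rwa [sub_sub_sub_comm, ← mul_sub] at this

lemma ball_subset_image_of_norm_deriv_le {f : ℂ → ℂ} {a : ℂ} {s : ℝ}
    (hf : DifferentiableOn ℂ f (ball a s))
    (hbound : ∀ z ∈ ball a s, ‖deriv f z‖ ≤ 2 * ‖deriv f a‖) (hs : 0 < s) :
    ball (f a) (‖deriv f a‖ * s / 24) ⊆ f '' ball a s := by
  rcases eq_or_ne (deriv f a) 0 with h0 | h0
  · simp [h0]
  have hsmall : closedBall a (s / 6) ⊆ ball a s := closedBall_subset_ball (by linarith)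
  have hsphere : ∀ z ∈ sphere a (s / 6), ‖deriv f a‖ * s / 12 ≤ ‖f z - f a‖ := fun z hz => by
    have hlin := norm_sub_sub_deriv_mul_le hf hbound (sphere_subset_closedBall hz) hs
    have htri := norm_sub_norm_le (deriv f a * (z - a)) (f z - f a)
    rw [norm_sub_rev (_ * _), norm_mul] at htri
    rw [mem_sphere_iff_norm] at hz
    rw [hz] at hlin htri
    linarith
  have hne : ∃ᶠ z in 𝓝 a, f z ≠ f a := fun hev => h0 <| by
    have hconst : f =ᶠ[𝓝 a] fun _ => f a := hev.mono fun _ => not_not.1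
    rw [hconst.deriv_eq, deriv_const]
  have hdcc : DiffContOnCl ℂ f (ball a (s / 6)) := by
    refine ⟨hf.mono (ball_subset_closedBall.trans hsmall), ?_⟩
    rw [closure_ball _ (by positivity)]
    exact hf.continuousOn.mono hsmall
  have himage := hdcc.ball_subset_image_closedBall (by positivity) hsphere hne
  rw [show ‖deriv f a‖ * s / 12 / 2 = ‖deriv f a‖ * s / 24 by ring] at himage
  exact himage.trans (Set.image_mono hsmall)

/-- Landau's trick: take for `a` a maximum point of `‖deriv f z‖ * (r - dist z c)`. -/
lemma exists_ball_norm_deriv_le {f : ℂ → ℂ} {c : ℂ} {r : ℝ}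
    (hf : ContinuousOn (deriv f) (closedBall c r)) (hr : 0 < r) (hc : deriv f c ≠ 0) :
    ∃ a, ∃ s > 0, ball a s ⊆ closedBall c r ∧ ‖deriv f c‖ * r ≤ 2 * (‖deriv f a‖ * s) ∧
      ∀ z ∈ ball a s, ‖deriv f z‖ ≤ 2 * ‖deriv f a‖ := by
  obtain ⟨a, -, hmax⟩ := (isCompact_closedBall c r).exists_isMaxOn
    (f := fun z => ‖deriv f z‖ * (r - dist z c)) ⟨c, mem_closedBall_self hr.le⟩ (by fun_prop)
  set s := (r - dist a c) / 2 with hs_def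
  have hac : r - dist a c = 2 * s := by rw [hs_def]; ring
  have hmax_s : ∀ z ∈ closedBall c r, ‖deriv f z‖ * (r - dist z c) ≤ 2 * (‖deriv f a‖ * s) :=
    fun z hz => (hmax hz).trans_eq (by simp only [hac]; ring)
  have hmax_c : ‖deriv f c‖ * r ≤ 2 * (‖deriv f a‖ * s) := by
    simpa using hmax_s c (mem_closedBall_self hr.le)
  have hs : 0 < s := pos_of_mul_pos_right
    (by linarith [mul_pos (norm_pos_iff.2 hc) hr] : 0 < ‖deriv f a‖ * s) (norm_nonneg _)
  have hball : ∀ z ∈ ball a s, s ≤ r - dist z c := fun z hz => by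
    linarith [dist_triangle z a c, mem_ball.1 hz]
  have hsub : ball a s ⊆ closedBall c r := fun z hz =>
    mem_closedBall.2 (by linarith [hball z hz])
  refine ⟨a, s, hs, hsub, hmax_c, fun z hz => le_of_mul_le_mul_right ?_ hs⟩
  calc ‖deriv f z‖ * s ≤ ‖deriv f z‖ * (r - dist z c) := by gcongr; exact hball z hz
    _ ≤ 2 * ‖deriv f a‖ * s := (hmax_s z (hsub hz)).trans_eq (mul_assoc _ _ _).symm

/-- **Bloch's theorem**, in contrapositive form. -/
lemma norm_deriv_le_of_forall_exists_notMem_image {f : ℂ → ℂ} {c : ℂ} {R L : ℝ}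
    (hf : DifferentiableOn ℂ f (ball c R)) (hR : 0 < R)
    (homit : ∀ w, ∃ a, dist a w < L ∧ a ∉ f '' ball c R) : ‖deriv f c‖ ≤ 48 * L / R := by
  have hL : 0 < L := (homit 0).elim fun _ ha => dist_nonneg.trans_lt ha.1
  by_contra! hlt
  have hpos : 0 < ‖deriv f c‖ := lt_trans (by positivity) hlt
  rw [div_lt_iff₀ hR, ← div_lt_iff₀' hpos] at hlt
  obtain ⟨r, hr, hrR⟩ := exists_between hlt
  have hsub : closedBall c r ⊆ ball c R := closedBall_subset_ball hrR
  obtain ⟨a, s, hs, hball, hmul, hbound⟩ := exists_ball_norm_deriv_le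
    ((hf.deriv isOpen_ball).continuousOn.mono hsub) (lt_trans (by positivity) hr)
    (norm_pos_iff.1 hpos)
  obtain ⟨b, hb, hb_omit⟩ := homit (f a)
  rw [div_lt_iff₀' hpos] at hr
  have hb_mem : b ∈ f '' ball a s :=
    ball_subset_image_of_norm_deriv_le (hf.mono (hball.trans hsub)) hbound hs
      (mem_ball.2 (by linarith))
  exact hb_omit (Set.image_mono (hball.trans hsub) hb_mem)

lemma dist_le_of_forall_exists_notMem_image {f : ℂ → ℂ} {c z : ℂ} {R L : ℝ}
    (hf : DifferentiableOn ℂ f (ball c R)) (hz : z ∈ ball c R)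
    (homit : ∀ w, ∃ a, dist a w < L ∧ a ∉ f '' ball c R) :
    dist (f z) (f c) ≤ 48 * L / (R - dist z c) * dist z c := by
  have hderiv : ∀ w ∈ closedBall c (dist z c), ‖deriv f w‖ ≤ 48 * L / (R - dist z c) :=
    fun w hw => by
      have hsub : ball w (R - dist z c) ⊆ ball c R :=
        ball_subset_ball' (by linarith [mem_closedBall.1 hw])
      refine norm_deriv_le_of_forall_exists_notMem_image (hf.mono hsub) (sub_pos.2 hz) fun b => ?_
      obtain ⟨a, hab, ha⟩ := homit b
      exact ⟨a, hab, fun h => ha (Set.image_mono hsub h)⟩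
  have hdiff : ∀ w ∈ closedBall c (dist z c), DifferentiableAt ℂ f w := fun w hw =>
    hf.differentiableAt (isOpen_ball.mem_nhds (closedBall_subset_ball hz hw))
  have hconvex := convex_closedBall c (dist z c)
  simpa only [dist_eq_norm] using hconvex.norm_image_sub_le_of_norm_deriv_le
    hdiff hderiv (mem_closedBall_self dist_nonneg) (mem_closedBall.2 le_rfl)

/-- The bound in Schottky's theorem for functions on `ball c R`, in terms of
`t = dist z c / (R - dist z c)`. The factor `144` is the product of the constant `48` from Bloch's
theorem and the radius `3` within which the points `a` with `cos (π * a)` an integer are found. -/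
def schottkyBound (t : ℝ) : ℝ := Real.exp (Real.pi * Real.exp (Real.pi * (144 * t)))

lemma schottkyBound_mono : Monotone schottkyBound := fun s t hst => by
  unfold schottkyBound
  gcongr

lemma two_le_schottkyBound {t : ℝ} (ht : 0 ≤ t) : 2 ≤ schottkyBound t := by
  have hexp : 1 ≤ Real.exp (Real.pi * (144 * t)) := Real.one_le_exp (by positivity)
  calc 2 ≤ Real.pi * Real.exp (Real.pi * (144 * t)) := by nlinarith [Real.pi_gt_three]
    _ ≤ schottkyBound t := (le_add_of_nonneg_right zero_le_one).trans (Real.add_one_le_exp _)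

lemma isSimplyConnected_ball (c : ℂ) {R : ℝ} (hR : 0 < R) : IsSimplyConnected (ball c R) :=
  have := (convex_ball c R).contractibleSpace (nonempty_ball.2 hR)
  SimplyConnectedSpace.ofContractible _

lemma norm_cos_pi_mul_le {w w₀ : ℂ} (hw₀ : w₀.im = 0) {B : ℝ} (h : dist w w₀ ≤ B) :
    ‖Complex.cos (Real.pi * w)‖ ≤ Real.exp (Real.pi * B) := by
  have him : |w.im| ≤ B := by
    simpa [hw₀] using (Complex.abs_im_le_norm (w - w₀)).trans (dist_eq_norm w w₀ ▸ h)
  refine (norm_cos_le_exp_abs_im _).trans (Real.exp_le_exp.2 ?_)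
  rw [Complex.im_ofReal_mul, abs_mul, abs_of_pos Real.pi_pos]
  gcongr

lemma ne_intCast_of_cos_pi_mul_ne {w : ℂ} (h1 : Complex.cos (Real.pi * w) ≠ 1)
    (h2 : Complex.cos (Real.pi * w) ≠ -1) (n : ℤ) : w ≠ n := by
  rintro rfl
  have hsq := Complex.sin_sq_add_cos_sq (n * Real.pi)
  rw [Complex.sin_int_mul_pi, mul_comm, zero_pow two_ne_zero, zero_add] at hsq
  exact sq_ne_one_iff.2 ⟨h1, h2⟩ hsq

/-- **Schottky's theorem**, for a function whose value at the centre lies in `[0, 1]`. If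
`2 * f - 1 = cos (π * F)` and `F = cos (π * g)`, then `g` omits all points `a` with `cos (π * a)`
an integer, so that Bloch's theorem applies to `g`. -/
lemma norm_le_schottkyBound {f : ℂ → ℂ} {c z : ℂ} {R : ℝ} (hf : DifferentiableOn ℂ f (ball c R))
    (h0 : ∀ z ∈ ball c R, f z ≠ 0) (h1 : ∀ z ∈ ball c R, f z ≠ 1) {x : ℝ}
    (hx : x ∈ Set.Icc 0 1) (hfc : f c = x) (hz : z ∈ ball c R) :
    ‖f z‖ ≤ schottkyBound (dist z c / (R - dist z c)) := by
  have hR : 0 < R := dist_nonneg.trans_lt hz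
  have hc : c ∈ ball c R := mem_ball_self hR
  have hU := isSimplyConnected_ball c hR
  set t := dist z c / (R - dist z c) with ht_def
  have ht : 0 ≤ t := div_nonneg dist_nonneg (sub_pos.2 hz).le
  have hf1 : ∀ z ∈ ball c R, 2 * f z - 1 ≠ 1 := fun z hz h => h1 z hz (by linear_combination h / 2)
  have hf2 : ∀ z ∈ ball c R, 2 * f z - 1 ≠ -1 := fun z hz h => h0 z hz (by linear_combination h / 2)
  obtain ⟨F, hF, hFcos, y, hy, hFc⟩ := exists_differentiableOn_cos_pi_mul_eq_of_mem_Icc hU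
    isOpen_ball (f := fun z => 2 * f z - 1) (by fun_prop) hf1 hf2 hc (x := 2 * x - 1)
    ⟨by linarith [hx.1], by linarith [hx.2]⟩ (by simp [hfc])
  have hFint : ∀ z ∈ ball c R, ∀ n : ℤ, F z ≠ n := fun z hz => ne_intCast_of_cos_pi_mul_ne
    (hFcos z hz ▸ hf1 z hz) (hFcos z hz ▸ hf2 z hz)
  obtain ⟨g, hg, hgcos, w, -, hgc⟩ := exists_differentiableOn_cos_pi_mul_eq_of_mem_Icc hU
    isOpen_ball hF (fun z hz => mod_cast hFint z hz 1) (fun z hz => mod_cast hFint z hz (-1))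
    hc hy hFc
  have homit : ∀ b, ∃ a, dist a b < 3 ∧ a ∉ g '' ball c R := fun b => by
    obtain ⟨a, hab, n, hn⟩ := exists_dist_lt_three_cos_pi_mul_eq_intCast b
    refine ⟨a, hab, ?_⟩
    rintro ⟨z, hz, rfl⟩
    exact hFint z hz n ((hgcos z hz).symm.trans hn)
  have hgdist : dist (g z) (g c) ≤ 144 * t :=
    (dist_le_of_forall_exists_notMem_image hg hz homit).trans_eq (by rw [ht_def]; ring)
  have hFle : ‖F z‖ ≤ Real.exp (Real.pi * (144 * t)) :=
    hgcos z hz ▸ norm_cos_pi_mul_le (by simp [hgc]) hgdist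
  have hfle : ‖2 * f z - 1‖ ≤ schottkyBound t :=
    hFcos z hz ▸ norm_cos_pi_mul_le (w₀ := 0) Complex.zero_im (by simpa using hFle)
  have h2f : 2 * ‖f z‖ ≤ ‖2 * f z - 1‖ + 1 := by
    simpa using norm_add_le (2 * f z - 1) 1
  linarith [two_le_schottkyBound ht]

end LandauBlochSchottky

section Decay

open Metric Filter Topology Asymptotics

lemma norm_le_mul_norm_pow_of_isBigO_pow {E : Type*} [NormedAddCommGroup E] [NormedSpace ℂ E]
    {h : ℂ → E} {M : ℝ} {n : ℕ} (hd : DifferentiableOn ℂ h (ball 0 1))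
    (hM : ∀ w ∈ ball (0 : ℂ) 1, ‖h w‖ ≤ M) (hO : h =O[𝓝 0] fun w => w ^ n) {w : ℂ}
    (hw : w ∈ ball (0 : ℂ) 1) : ‖h w‖ ≤ M * ‖w‖ ^ n := by
  rcases n with _ | m
  · simpa using hM w hw
  · have h0 : h 0 = 0 := IsBigO.eq_zero_of_norm_pow (x₀ := (0 : ℂ)) (n := m + 1)
      (by simpa using hO.norm_right) m.succ_ne_zero
    have hmaps : Set.MapsTo h (ball 0 1) (closedBall (h 0) M) := fun w hw => by
      simpa [h0] using hM w hw
    have hlittle : (fun w => h w - h 0) =o[𝓝 0] fun w => ‖w - 0‖ ^ m := by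
      simpa [h0] using (hO.trans_isLittleO (isLittleO_pow_pow m.lt_succ_self)).norm_right
    simpa [h0] using
      Complex.dist_le_mul_div_pow_of_mapsTo_ball_of_isLittleO hd hmaps hlittle hw

lemma mem_thickening_ofReal_Icc {l c δ : ℝ} {z : ℂ} (hl : 0 ≤ l) (hre : z.re ∈ Set.Icc (-c) (l + c))
    (him : |z.im| ≤ 2 * c) (hδ : 3 * c < δ) :
    z ∈ thickening δ ((↑) '' Set.Icc (0 : ℝ) l : Set ℂ) := by
  obtain ⟨x, hx, hxre⟩ : ∃ x ∈ Set.Icc 0 l, |z.re - x| ≤ c := by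
    refine ⟨max 0 (min l z.re), ⟨le_max_left _ _, max_le hl (min_le_left _ _)⟩, ?_⟩
    have := hre.1
    have := hre.2
    grind
  refine mem_thickening_iff.2 ⟨x, Set.mem_image_of_mem _ hx, ?_⟩
  calc dist z x ≤ |z.re - x| + |z.im| := by
        simpa [dist_eq_norm] using Complex.norm_le_abs_re_add_abs_im (z - x)
    _ < δ := by linarith

section LogStrip

variable {α : ℝ} {z : ℂ} (hα₀ : 0 ≤ α) (hα₁ : α < 1) (hz : z ∈ ball (0 : ℂ) 1)
include hα₀ hz

lemma one_sub_le_re_one_sub_mul : 1 - α ≤ (1 - α * z).re := by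
  have hre : z.re ≤ 1 := (Complex.re_le_norm z).trans (mem_ball_zero_iff.1 hz).le
  rw [Complex.sub_re, Complex.one_re, Complex.re_ofReal_mul]
  exact sub_le_sub_left (mul_le_of_le_one_right hα₀ hre) _

include hα₁

lemma one_sub_mul_mem_slitPlane : 1 - α * z ∈ Complex.slitPlane :=
  Or.inl (by linarith [one_sub_le_re_one_sub_mul hα₀ hz])

lemma re_log_one_sub_mul_mem_Icc : (Complex.log (1 - α * z)).re ∈ Set.Icc (Real.log (1 - α)) 1 := by
  have hlow : 1 - α ≤ ‖1 - α * z‖ :=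
    (one_sub_le_re_one_sub_mul hα₀ hz).trans (Complex.re_le_norm _)
  have hhigh : ‖1 - α * z‖ ≤ 2 := by
    have htri := norm_sub_le 1 (α * z)
    rw [norm_one, norm_mul, Complex.norm_of_nonneg hα₀] at htri
    linarith [mul_le_one₀ hα₁.le (norm_nonneg z) (mem_ball_zero_iff.1 hz).le]
  have hpos : 0 < 1 - α := sub_pos.2 hα₁
  rw [Complex.log_re]
  exact ⟨Real.log_le_log hpos hlow,
    (Real.log_le_sub_one_of_pos (hpos.trans_le hlow)).trans (by linarith)⟩

lemma abs_im_log_one_sub_mul_le : |(Complex.log (1 - α * z)).im| ≤ 2 := by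
  have hre := one_sub_le_re_one_sub_mul hα₀ hz
  have harg := Complex.abs_arg_lt_pi_div_two_iff.2 (Or.inl (by linarith : 0 < (1 - α * z).re))
  rw [Complex.log_im]
  linarith [Real.pi_lt_four]

end LogStrip

/-- Up to scaling, `z ↦ -log (1 - z)` maps the unit disc into a half-strip around the positive
real axis; shrinking the disc by a factor `α < 1` cuts this half-strip off. -/
lemma exists_mapsTo_ball_thickening_ofReal_Icc {l δ : ℝ} (hl : 0 < l) (hδ : 0 < δ) :
    ∃ φ : ℂ → ℂ, DifferentiableOn ℂ φ (ball 0 1) ∧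
      Set.MapsTo φ (ball 0 1) (thickening δ ((↑) '' Set.Icc (0 : ℝ) l)) ∧ φ 0 = 0 ∧
      ∃ t ∈ Set.Ioo (0 : ℝ) 1, φ t = l := by
  set c := δ / 4 with hc_def
  have hc : 0 < c := by positivity
  have hlc : 0 < l / c := by positivity
  have hclc : c * (l / c) = l := mul_div_cancel₀ _ hc.ne'
  set α := 1 - Real.exp (-(l / c) - 1) with hα_def
  set s := 1 - Real.exp (-(l / c)) with hs_def
  have hs₀ : 0 < s := sub_pos.2 (Real.exp_lt_one_iff.2 (neg_lt_zero.2 hlc))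
  have hsα : s < α := sub_lt_sub_left (Real.exp_lt_exp.2 (sub_one_lt _)) _
  have hα₁ : α < 1 := sub_lt_self _ (Real.exp_pos _)
  have hα₀ : 0 < α := hs₀.trans hsα
  refine ⟨fun z => -c * Complex.log (1 - α * z), fun z hz => ?_, fun z hz => ?_, by simp, s / α,
    ⟨by positivity, (div_lt_one hα₀).2 hsα⟩, ?_⟩
  · have := one_sub_mul_mem_slitPlane hα₀.le hα₁ hz
    fun_prop (disch := assumption)
  · have hre := re_log_one_sub_mul_mem_Icc hα₀.le hα₁ hz
    have him := abs_im_log_one_sub_mul_le hα₀.le hα₁ hz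
    rw [hα_def, sub_sub_cancel, Real.log_exp, ← hα_def] at hre
    have hre_eq : (-c * Complex.log (1 - α * z)).re = -c * (Complex.log (1 - α * z)).re := by simp
    have him_eq : (-c * Complex.log (1 - α * z)).im = -c * (Complex.log (1 - α * z)).im := by simp
    refine mem_thickening_ofReal_Icc (c := c) hl.le ⟨?_, ?_⟩ ?_ (by linarith)
    · rw [hre_eq]
      nlinarith [hre.2]
    · rw [hre_eq]
      nlinarith [hre.1]
    · rw [him_eq, abs_mul, abs_neg, abs_of_pos hc, mul_comm]
      gcongr
  · have hs_eq : 1 - α * ((s / α : ℝ) : ℂ) = (Real.exp (-(l / c)) : ℝ) := by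
      rw [← Complex.ofReal_mul, mul_div_cancel₀ _ hα₀.ne', hs_def]
      push_cast
      ring
    beta_reduce
    rw [hs_eq, ← Complex.ofReal_log (Real.exp_pos _).le, Real.log_exp]
    exact_mod_cast (neg_mul_neg c (l / c)).trans hclc

lemma exists_norm_apply_le_mul_pow {E : Type*} [NormedAddCommGroup E] [NormedSpace ℂ E] {l δ : ℝ}
    (hl : 0 < l) (hδ : 0 < δ) :
    ∃ t ∈ Set.Ioo (0 : ℝ) 1, ∀ (h : ℂ → E) (M : ℝ) (n : ℕ),
      DifferentiableOn ℂ h (thickening δ ((↑) '' Set.Icc (0 : ℝ) l)) →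
      (∀ z ∈ thickening δ ((↑) '' Set.Icc (0 : ℝ) l), ‖h z‖ ≤ M) →
      (h =O[𝓝 0] fun z => z ^ n) → ‖h l‖ ≤ M * t ^ n := by
  obtain ⟨φ, hφ, hmaps, hφ0, t, ht, hφt⟩ := exists_mapsTo_ball_thickening_ofReal_Icc hl hδ
  refine ⟨t, ht, fun h M n hd hM hO => ?_⟩
  have ht_norm : ‖(t : ℂ)‖ = t := Complex.norm_of_nonneg ht.1.le
  have hφ_diff : DifferentiableAt ℂ φ 0 :=
    hφ.differentiableAt (isOpen_ball.mem_nhds (mem_ball_self one_pos))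
  have hφ_tendsto : Tendsto φ (𝓝 0) (𝓝 0) := by simpa [hφ0] using hφ_diff.continuousAt.tendsto
  have hφ_bigO : φ =O[𝓝 0] fun z => z := by simpa [hφ0] using hφ_diff.isBigO_sub
  have hcomp := norm_le_mul_norm_pow_of_isBigO_pow (h := h ∘ φ) (hd.comp hφ hmaps)
    (fun w hw => hM _ (hmaps hw)) ((hO.comp_tendsto hφ_tendsto).trans (hφ_bigO.pow n))
    (w := t) (mem_ball_zero_iff.2 (ht_norm.trans_lt ht.2))
  rwa [Function.comp_apply, hφt, ht_norm] at hcomp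

end Decay

open scoped Classical

section IndependencePolynomial

variable {V : Type*} {G : SimpleGraph V} {R : Type*} [Field R]

lemma isInd_insert {v : V} {s : Finset V} :
    IsInd G (insert v s) ↔ IsInd G s ∧ ∀ u ∈ s, ¬ G.Adj v u := by
  simp only [IsInd, forall_mem_insert, G.irrefl, not_false_eq_true, true_and, G.adj_comm _ v,
    forall₂_and]
  tauto

variable [Fintype V]

lemma mem_closedNbhd {u v : V} : u ∈ closedNbhd G v ↔ u = v ∨ G.Adj v u := by
  simp [closedNbhd]

lemma sdiff_closedNbhd (A : Finset V) (v : V) :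
    A \ closedNbhd G v = (A \ {v}) \ G.neighborFinset v := by
  ext u
  simp only [mem_sdiff, mem_closedNbhd, mem_singleton, SimpleGraph.mem_neighborFinset]
  tauto

lemma Z_eq_sum_filter (A : Finset V) (z : R) :
    Z R G A z = ∑ s ∈ A.powerset with IsInd G s, z ^ s.card :=
  (sum_filter _ _).symm

lemma Z_eq_add_mul {A : Finset V} {v : V} (hv : v ∈ A) (z : R) :
    Z R G A z = Z R G (A \ {v}) z + z * Z R G (A \ closedNbhd G v) z := by
  have hfilter : {s ∈ (A \ closedNbhd G v).powerset | IsInd G s} =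
      {s ∈ (A \ {v}).powerset | IsInd G (insert v s)} := by
    ext s
    simp only [mem_filter, mem_powerset, isInd_insert, subset_iff, mem_sdiff, mem_closedNbhd,
      mem_singleton, not_or]
    grind
  have hcard : ∀ s ∈ (A \ {v}).powerset, (insert v s).card = s.card + 1 := fun s hs =>
    card_insert_of_notMem fun hvs => by simpa using mem_powerset.1 hs hvs
  rw [Z_eq_sum_filter (A \ closedNbhd G v), hfilter, mul_sum, sum_filter]
  conv_lhs => rw [Z, ← insert_sdiff_self_of_mem hv, sum_powerset_insert (by simp)]
  refine congr_arg _ (sum_congr rfl fun s hs => ?_)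
  rw [hcard s hs, pow_succ']

lemma map_Z {S : Type*} [Field S] (f : R →+* S) (A : Finset V) (z : R) :
    f (Z R G A z) = Z S G A (f z) := by
  simp only [Z_eq_sum_filter, map_sum, map_pow]

lemma Z_pos [LinearOrder R] [IsStrictOrderedRing R] (A : Finset V) {x : R} (hx : 0 ≤ x) :
    0 < Z R G A x := by
  rw [Z_eq_sum_filter]
  exact sum_pos' (fun s _ => by positivity)
    ⟨∅, mem_filter.2 ⟨empty_mem_powerset A, by simp [IsInd]⟩, by simp⟩

lemma Z_mono [LinearOrder R] [IsStrictOrderedRing R] {A B : Finset V} (hAB : A ⊆ B) {x : R}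
    (hx : 0 ≤ x) : Z R G A x ≤ Z R G B x := by
  simp only [Z_eq_sum_filter]
  exact sum_le_sum_of_subset_of_nonneg (filter_subset_filter _ (powerset_mono.2 hAB))
    fun s _ _ => by positivity

lemma differentiable_Z {𝕜 : Type*} [NontriviallyNormedField 𝕜] (A : Finset V) :
    Differentiable 𝕜 fun z : 𝕜 => Z 𝕜 G A z := by
  simp only [Z_eq_sum_filter]
  fun_prop

lemma Z_comap {W : Type*} [Fintype W] (e : W ↪ V) (A : Finset W) (z : R) :
    Z R (G.comap e) A z = Z R G (A.map e) z := by
  have hind : ∀ s : Finset W, IsInd G (s.map e) ↔ IsInd (G.comap e) s := fun s => by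
    simp [IsInd]
  simp only [Z_eq_sum_filter]
  refine sum_bij (fun s _ => s.map e) (fun s hs => ?_) (fun s _ t _ h => map_injective e h)
    (fun t ht => ?_) fun s _ => by rw [card_map]
  · rw [mem_filter, mem_powerset] at hs ⊢
    exact ⟨map_subset_map.2 hs.1, (hind s).2 hs.2⟩
  · rw [mem_filter, mem_powerset] at ht
    obtain ⟨s, hs, rfl⟩ := subset_map_iff.1 ht.1
    exact ⟨s, mem_filter.2 ⟨mem_powerset.2 hs, (hind s).1 ht.2⟩, rfl⟩

end IndependencePolynomial

section Vacancy

variable {V : Type*} [Fintype V] {G : SimpleGraph V}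

/-- The activity `z` is a zero of the independence polynomial of no induced subgraph of `G`. -/
def IsZeroFree {R : Type*} [Field R] (G : SimpleGraph V) (z : R) : Prop :=
  ∀ A : Finset V, Z R G A z ≠ 0

/-- The ratio `Z_{G[A ∖ T]}(z) / Z_{G[A]}(z)`. For positive real `z` this is the probability that
no vertex of `T` is occupied in the hard-core model on `G[A]`. -/
def vacancy {R : Type*} [Field R] (G : SimpleGraph V) (A T : Finset V) (z : R) : R :=
  Z R G (A \ T) z / Z R G A z

section Field

variable {R : Type*} [Field R] {z : R}

lemma vacancy_of_disjoint (hz : IsZeroFree G z) {A T : Finset V} (hAT : Disjoint A T) :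
    vacancy G A T z = 1 := by
  rw [vacancy, sdiff_eq_self_of_disjoint hAT, div_self (hz A)]

lemma vacancy_insert (hz : IsZeroFree G z) (A T : Finset V) (u : V) :
    vacancy G A (insert u T) z = vacancy G (A \ T) {u} z * vacancy G A T z := by
  rw [vacancy, vacancy, vacancy, div_mul_div_cancel₀ (hz _), sdiff_insert, sdiff_singleton_eq_erase]

lemma vacancy_singleton_mul (hz : IsZeroFree G z) {A : Finset V} {v : V} (hv : v ∈ A) :
    vacancy G A {v} z * (1 + z * vacancy G (A \ {v}) (G.neighborFinset v) z) = 1 := by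
  have h := Z_eq_add_mul (G := G) hv z
  have hA := hz A
  have hAv := hz (A \ {v})
  rw [sdiff_closedNbhd] at h
  rw [vacancy, vacancy]
  field_simp
  exact h.symm

lemma vacancy_ne_zero (hz : IsZeroFree G z) (A T : Finset V) : vacancy G A T z ≠ 0 :=
  div_ne_zero (hz _) (hz _)

lemma vacancy_singleton_ne_one (hz : IsZeroFree G z) (hz0 : z ≠ 0) {A : Finset V} {v : V}
    (hv : v ∈ A) : vacancy G A {v} z ≠ 1 := by
  intro h
  have hrec := vacancy_singleton_mul hz hv
  rw [h, one_mul, add_eq_left] at hrec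
  exact mul_ne_zero hz0 (vacancy_ne_zero hz _ _) hrec

lemma map_vacancy {S : Type*} [Field S] (f : R →+* S) (A T : Finset V) (z : R) :
    f (vacancy G A T z) = vacancy G A T (f z) := by
  rw [vacancy, vacancy, map_div₀, map_Z, map_Z]

lemma vacancy_mem_Icc [LinearOrder R] [IsStrictOrderedRing R] (A T : Finset V) (hz : 0 ≤ z) :
    vacancy G A T z ∈ Set.Icc 0 1 :=
  ⟨div_nonneg (Z_pos _ hz).le (Z_pos _ hz).le,
    div_le_one_of_le₀ (Z_mono sdiff_subset hz) (Z_pos _ hz).le⟩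

end Field

lemma differentiableAt_vacancy {𝕜 : Type*} [NontriviallyNormedField 𝕜] {z : 𝕜}
    (hz : IsZeroFree G z) (A T : Finset V) : DifferentiableAt 𝕜 (vacancy G A T) z :=
  (differentiable_Z _ z).fun_div (differentiable_Z _ z) (hz A)

section Norm

variable {𝕜 : Type*} [NormedField 𝕜] {z : 𝕜}

lemma norm_vacancy_le_pow (hz : IsZeroFree G z) {A : Finset V} {K : ℝ} (hK : 0 ≤ K)
    (hA : ∀ B ⊆ A, ∀ u, ‖vacancy G B {u} z‖ ≤ K) (T : Finset V) :
    ‖vacancy G A T z‖ ≤ K ^ T.card := by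
  induction T using Finset.induction_on with
  | empty => simp [vacancy_of_disjoint hz]
  | insert u T hu ih =>
    rw [vacancy_insert hz, norm_mul, card_insert_of_notMem hu, pow_succ']
    gcongr
    exact hA _ sdiff_subset u

lemma norm_vacancy_sub_le (hz : IsZeroFree G z) {K D : ℝ} (hK : 1 ≤ K)
    (hvac : ∀ A u, ‖vacancy G A {u} z‖ ≤ K) {A B T : Finset V}
    (hD : ∀ S, ∀ u ∈ T, ‖vacancy G (A \ S) {u} z - vacancy G (B \ S) {u} z‖ ≤ D) :
    ‖vacancy G A T z - vacancy G B T z‖ ≤ T.card * K ^ T.card * D := by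
  induction T using Finset.induction_on with
  | empty => simp [vacancy_of_disjoint hz]
  | insert u T hu ih =>
    have ih := ih fun S w hw => hD S w (mem_insert_of_mem hw)
    have hDu := hD T u (mem_insert_self u T)
    have hD0 : 0 ≤ D := (norm_nonneg _).trans hDu
    rw [vacancy_insert hz, vacancy_insert hz, card_insert_of_notMem hu]
    set a := vacancy G (A \ T) {u} z
    set b := vacancy G (B \ T) {u} z
    set p := vacancy G A T z
    set q := vacancy G B T z
    calc ‖a * p - b * q‖ = ‖(a - b) * p + b * (p - q)‖ := by ring_nf
      _ ≤ ‖a - b‖ * ‖p‖ + ‖b‖ * ‖p - q‖ := by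
          simpa only [norm_mul] using norm_add_le ((a - b) * p) (b * (p - q))
      _ ≤ D * K ^ T.card + K * (T.card * K ^ T.card * D) := by
          gcongr
          · exact norm_vacancy_le_pow hz (by positivity) (fun B _ => hvac B) T
          · exact hvac _ _
      _ ≤ D * (K * K ^ T.card) + K * (T.card * K ^ T.card * D) := by
          gcongr
          exact le_mul_of_one_le_left (by positivity) hK
      _ = (T.card + 1 : ℕ) * K ^ (T.card + 1) * D := by
          push_cast
          ring

end Norm

end Vacancy

section AgreeOnBall

variable {V : Type*} {G : SimpleGraph V}

/-- `A` and `B` contain the same vertices at distance less than `n` from `v`. -/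
def AgreeOnBall (G : SimpleGraph V) (v : V) (n : ℕ) (A B : Finset V) : Prop :=
  ∀ u, G.edist v u < n → (u ∈ A ↔ u ∈ B)

lemma edist_lt_succ_of_adj {u v w : V} {n : ℕ} (hvu : G.Adj v u) (huw : G.edist u w < n) :
    G.edist v w < (n + 1 : ℕ) :=
  calc G.edist v w ≤ G.edist v u + G.edist u w := G.edist_triangle
    _ < (n + 1 : ℕ) := by
      rw [SimpleGraph.edist_eq_one_iff_adj.2 hvu, Nat.cast_succ, add_comm]
      exact (ENat.add_lt_add_iff_right ENat.one_ne_top).2 huw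

lemma AgreeOnBall.sdiff {v : V} {n : ℕ} {A B : Finset V} (h : AgreeOnBall G v n A B)
    (S : Finset V) : AgreeOnBall G v n (A \ S) (B \ S) := fun u hu => by
  rw [mem_sdiff, mem_sdiff, h u hu]

lemma AgreeOnBall.of_adj {u v : V} {n : ℕ} {A B : Finset V} (h : AgreeOnBall G v (n + 1) A B)
    (hvu : G.Adj v u) : AgreeOnBall G u n A B := fun w hw =>
  h w (edist_lt_succ_of_adj hvu hw)

end AgreeOnBall

section BoundedDegree

variable {V : Type*} [Fintype V] {G : SimpleGraph V}

lemma MaxDegLE.card_neighborFinset_le {Δ : ℕ} (hdeg : MaxDegLE G Δ) (v : V) :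
    (G.neighborFinset v).card ≤ Δ := by
  rw [SimpleGraph.neighborFinset_eq_filter]
  exact hdeg v

variable {𝕜 : Type*} [NormedField 𝕜] {z : 𝕜} {Δ : ℕ}

lemma norm_vacancy_singleton_le_two (hz : IsZeroFree G z) (hdeg : MaxDegLE G Δ)
    (hzΔ : ‖z‖ * 2 ^ (Δ + 1) ≤ 1) (A : Finset V) (v : V) : ‖vacancy G A {v} z‖ ≤ 2 := by
  induction A using Finset.strongInduction generalizing v with
  | H A ih =>
  by_cases hv : v ∈ A
  · set q := vacancy G (A \ {v}) (G.neighborFinset v) z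
    have hqΔ : ‖q‖ ≤ 2 ^ Δ := calc
      ‖q‖ ≤ 2 ^ (G.neighborFinset v).card :=
        norm_vacancy_le_pow hz zero_le_two (fun B hB => ih B (hB.trans_ssubset
          (sdiff_ssubset (singleton_subset_iff.2 hv) (singleton_nonempty v)))) _
      _ ≤ 2 ^ Δ := pow_le_pow_right₀ one_le_two (hdeg.card_neighborFinset_le v)
    have hzq : ‖z * q‖ ≤ 1 / 2 := by
      have : ‖z‖ * ‖q‖ ≤ ‖z‖ * 2 ^ Δ := by gcongr
      rw [norm_mul]
      rw [pow_succ] at hzΔ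
      linarith
    have hden : 1 / 2 ≤ ‖1 + z * q‖ := by
      have := norm_sub_le (1 + z * q) (z * q)
      rw [add_sub_cancel_right, norm_one] at this
      linarith
    have hrec : ‖vacancy G A {v} z‖ * ‖1 + z * q‖ = 1 := by
      rw [← norm_mul, vacancy_singleton_mul hz hv, norm_one]
    nlinarith [norm_nonneg (vacancy G A {v} z)]
  · rw [vacancy_of_disjoint hz (disjoint_singleton_right.2 hv), norm_one]
    exact one_le_two

lemma norm_vacancy_singleton_sub_le (hz : IsZeroFree G z) (hdeg : MaxDegLE G Δ)
    (hzΔ : ‖z‖ * 2 ^ (Δ + 1) ≤ 1) {n : ℕ} {A B : Finset V} {v : V} (hAB : AgreeOnBall G v n A B) :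
    ‖vacancy G A {v} z - vacancy G B {v} z‖ ≤ 4 * (4 * Δ * 2 ^ Δ * ‖z‖) ^ n := by
  have hvac := norm_vacancy_singleton_le_two hz hdeg hzΔ
  induction n generalizing A B v with
  | zero =>
    calc _ ≤ ‖vacancy G A {v} z‖ + ‖vacancy G B {v} z‖ := norm_sub_le _ _
      _ ≤ 2 + 2 := add_le_add (hvac A v) (hvac B v)
      _ = 4 * (4 * Δ * 2 ^ Δ * ‖z‖) ^ 0 := by norm_num
  | succ n ih =>
    set D := 4 * (4 * Δ * 2 ^ Δ * ‖z‖) ^ n with hD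
    have hv : v ∈ A ↔ v ∈ B := hAB v (by simp)
    by_cases hvA : v ∈ A
    · set p := vacancy G (A \ {v}) (G.neighborFinset v) z
      set q := vacancy G (B \ {v}) (G.neighborFinset v) z
      have hpq : ‖p - q‖ ≤ Δ * 2 ^ Δ * D := calc
        ‖p - q‖ ≤ (G.neighborFinset v).card * 2 ^ (G.neighborFinset v).card * D :=
          norm_vacancy_sub_le hz one_le_two hvac fun S u hu =>
            ih (((hAB.sdiff {v}).sdiff S).of_adj ((G.mem_neighborFinset v u).1 hu))
        _ ≤ Δ * 2 ^ Δ * D := by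
          gcongr
          exacts [hdeg.card_neighborFinset_le v, one_le_two, hdeg.card_neighborFinset_le v]
      have hsub : vacancy G A {v} z - vacancy G B {v} z =
          vacancy G A {v} z * vacancy G B {v} z * z * (q - p) := by
        linear_combination vacancy G B {v} z * vacancy_singleton_mul hz hvA -
          vacancy G A {v} z * vacancy_singleton_mul hz (hv.1 hvA)
      calc ‖vacancy G A {v} z - vacancy G B {v} z‖
          = ‖vacancy G A {v} z‖ * ‖vacancy G B {v} z‖ * ‖z‖ * ‖p - q‖ := by
            rw [hsub, norm_mul, norm_mul, norm_mul, norm_sub_rev p q]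
        _ ≤ 2 * 2 * ‖z‖ * (Δ * 2 ^ Δ * D) := by
            gcongr
            exacts [hvac A v, hvac B v]
        _ = 4 * (4 * Δ * 2 ^ Δ * ‖z‖) ^ (n + 1) := by
            rw [hD, pow_succ]
            ring
    · rw [vacancy_of_disjoint hz (disjoint_singleton_right.2 hvA),
        vacancy_of_disjoint hz (disjoint_singleton_right.2 (hv.not.1 hvA)), sub_self, norm_zero]
      positivity

end BoundedDegree

section SpatialMarkov

variable {V : Type*} {G : SimpleGraph V}

lemma isInd_union {s t : Finset V} :
    IsInd G (s ∪ t) ↔ IsInd G s ∧ IsInd G t ∧ ∀ u ∈ s, ∀ w ∈ t, ¬ G.Adj u w := by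
  simp only [IsInd, mem_union]
  grind [G.adj_comm]

variable [Fintype V] {Λ : Finset V} {σ : V → Bool}

lemma subset_goodSet {t : Finset V} :
    t ⊆ goodSet G Λ σ ↔
      Disjoint t Λ ∧ ∀ u ∈ t, ∀ w ∈ Λ.filter (σ · = true), ¬ G.Adj u w := by
  simp only [subset_iff, goodSet, mem_filter, mem_sdiff, mem_univ, true_and, disjoint_left,
    G.adj_comm]
  grind

lemma sum_compat_eq_sum_goodSet (hσ : IsBC G Λ σ) {M : Type*} [AddCommMonoid M]
    (φ : Finset V → M) :
    ∑ s with IsInd G s ∧ Compat Λ σ s, φ s =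
      ∑ t ∈ (goodSet G Λ σ).powerset with IsInd G t, φ (t ∪ Λ.filter (σ · = true)) := by
  have hocc : IsInd G (Λ.filter (σ · = true)) := fun u hu w hw => by
    rw [mem_filter] at hu hw
    exact hσ u hu.1 w hw.1 hu.2 hw.2
  have hsplit : ∀ s, Compat Λ σ s → s \ Λ ∪ Λ.filter (σ · = true) = s := fun s hs => by
    ext u
    have := hs u
    grind
  symm
  refine sum_nbij' (· ∪ Λ.filter (σ · = true)) (· \ Λ) (fun t ht => ?_) (fun s hs => ?_)
    (fun t ht => ?_) (fun s hs => hsplit s (mem_filter.1 hs).2.2) fun _ _ => rfl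
  · obtain ⟨hgood, ht⟩ := mem_filter.1 ht
    obtain ⟨hdisj, hadj⟩ := subset_goodSet.1 (mem_powerset.1 hgood)
    refine mem_filter.2 ⟨mem_univ _, isInd_union.2 ⟨ht, hocc, hadj⟩, fun u hu => ?_⟩
    simp [hu, disjoint_right.1 hdisj hu]
  · obtain ⟨-, hs, hcompat⟩ := mem_filter.1 hs
    rw [← hsplit s hcompat, isInd_union] at hs
    exact mem_filter.2 ⟨mem_powerset.2 (subset_goodSet.2 ⟨sdiff_disjoint, hs.2.2⟩), hs.1⟩
  · have hdisj := (subset_goodSet.1 (mem_powerset.1 (mem_filter.1 ht).1)).1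
    rw [union_sdiff_distrib, sdiff_eq_self_of_disjoint hdisj, sdiff_eq_empty_iff_subset.2
      (filter_subset _ _), union_empty]

lemma sum_compat_disjoint (hσ : IsBC G Λ σ) {T : Finset V} (hT : Disjoint T Λ)
    {R : Type*} [Field R] (x : R) :
    (∑ s with IsInd G s ∧ Compat Λ σ s, if Disjoint s T then x ^ s.card else 0) =
      x ^ (Λ.filter (σ · = true)).card * Z R G (goodSet G Λ σ \ T) x := by
  have hfilter : {t ∈ (goodSet G Λ σ).powerset | IsInd G t ∧ Disjoint t T} =
      {t ∈ (goodSet G Λ σ \ T).powerset | IsInd G t} := by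
    ext t
    simp only [mem_filter, mem_powerset, subset_sdiff]
    tauto
  rw [sum_compat_eq_sum_goodSet hσ, Z_eq_sum_filter, ← hfilter, ← filter_filter, mul_sum,
    sum_filter (p := fun t => Disjoint t T)]
  refine sum_congr rfl fun t ht => ?_
  have hdisj := (subset_goodSet.1 (mem_powerset.1 (mem_filter.1 ht).1)).1
  have hiff : Disjoint (t ∪ Λ.filter (σ · = true)) T ↔ Disjoint t T := by
    rw [disjoint_union_left, and_iff_left (hT.symm.mono_left (filter_subset _ _))]
  simp only [hiff, card_union_of_disjoint (hdisj.mono_right (filter_subset _ _)), pow_add, mul_comm]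

lemma condProb_eq_one_sub_vacancy (hσ : IsBC G Λ σ) {x : ℝ} (hx : 0 < x) {v : V} (hv : v ∉ Λ) :
    condProb G x Λ σ v = 1 - vacancy G (goodSet G Λ σ) {v} x := by
  have hden := sum_compat_disjoint hσ (disjoint_empty_left Λ) x
  have hvac := sum_compat_disjoint hσ (disjoint_singleton_left.2 hv) x
  simp only [disjoint_empty_right, if_true, sdiff_empty, disjoint_singleton_right] at hden hvac
  have hnum : ∑ s with (IsInd G s ∧ Compat Λ σ s) ∧ v ∈ s, x ^ s.card =
      (∑ s with IsInd G s ∧ Compat Λ σ s, x ^ s.card) -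
        ∑ s with IsInd G s ∧ Compat Λ σ s, if v ∉ s then x ^ s.card else 0 := by
    rw [← filter_filter, ← sum_filter, eq_sub_iff_add_eq, sum_filter_add_sum_filter_not]
  simp only [condProb, ← sum_filter, ← and_assoc]
  rw [hnum, hden, hvac, ← mul_sub, mul_div_mul_left _ _ (pow_pos hx _).ne', sub_div,
    div_self (Z_pos _ hx.le).ne', vacancy]

lemma agreeOnBall_goodSet {τ : V → Bool} {v : V} {d : ℕ}
    (h : ∀ u ∈ Λ, σ u ≠ τ u → (d : ℕ∞) ≤ G.edist v u) :
    AgreeOnBall G v (d - 1) (goodSet G Λ σ) (goodSet G Λ τ) := by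
  intro u hu
  obtain ⟨n, rfl⟩ : ∃ n, d = n + 1 := Nat.exists_eq_add_one.2 <| Nat.pos_of_ne_zero <| by
    rintro rfl
    exact not_lt_zero hu
  rw [Nat.add_sub_cancel] at hu
  have hστ : ∀ w ∈ Λ, G.Adj w u → σ w = τ w := fun w hw hwu => by
    by_contra hne
    refine (h w hw hne).not_gt ?_
    rw [G.edist_comm] at hu ⊢
    exact edist_lt_succ_of_adj hwu hu
  simp only [goodSet, mem_filter, mem_sdiff, mem_univ, true_and]
  grind

end SpatialMarkov

section InducedSubgraphs

open Metric

lemma Z_inducedSub {R : Type*} [Field R] {s : Finset ℕ} (G : SimpleGraph (Vtx s))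
    (A : Finset (Vtx s)) (z : R) :
    Z R (inducedSub (map_subtype_subset A) G) univ z = Z R G A z := by
  let e : Vtx (A.map (Function.Embedding.subtype _)) ↪ Vtx s :=
    Subtype.impEmbedding _ _ fun _ hx => map_subtype_subset A hx
  have he : univ.map e = A := by
    ext x
    refine mem_map.trans ⟨?_, fun hx => ?_⟩
    · rintro ⟨y, -, rfl⟩
      obtain ⟨a, ha, hay⟩ := mem_map.1 y.2
      rwa [show e y = a from Subtype.ext hay.symm]
    · exact ⟨⟨x, mem_map_of_mem _ hx⟩, mem_univ _, rfl⟩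
  exact (Z_comap (G := G) e univ z).trans (by rw [he])

lemma ClosedUnderInduced.isZeroFree {𝒢 : ∀ s : Finset ℕ, SimpleGraph (Vtx s) → Prop}
    (hclosed : ClosedUnderInduced 𝒢) {R : Type*} [Field R] {z : R}
    (hz : ∀ s G, 𝒢 s G → Z R G univ z ≠ 0) {s : Finset ℕ} {G : SimpleGraph (Vtx s)}
    (hG : 𝒢 s G) : IsZeroFree G z := fun A => by
  rw [← Z_inducedSub]
  exact hz _ _ (hclosed s G hG _ _)

lemma infDist_ofReal_Ico_le_of_mem_thickening {l L ε : ℝ} (hl : l ∈ Set.Ioc 0 L) {z : ℂ}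
    (hz : z ∈ thickening ε ((↑) '' Set.Icc (0 : ℝ) l)) :
    infDist z ((fun x : ℝ => (x : ℂ)) '' Set.Ico 0 L) ≤ ε := by
  have hsub : ((↑) '' Set.Icc (0 : ℝ) l : Set ℂ) ⊆
      closure ((fun x : ℝ => (x : ℂ)) '' Set.Ico 0 L) := calc
    _ ⊆ (fun x : ℝ => (x : ℂ)) '' closure (Set.Ico 0 L) := by
      rw [closure_Ico (hl.1.trans_le hl.2).ne]
      exact Set.image_mono (Set.Icc_subset_Icc_right hl.2)
    _ ⊆ _ := image_closure_subset_closure_image Complex.continuous_ofReal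
  have hz := thickening_subset_of_subset ε hsub hz
  rw [thickening_closure] at hz
  have hne : (Set.Ico 0 L).Nonempty := Set.nonempty_Ico.2 (hl.1.trans_le hl.2)
  exact ((mem_thickening_iff_infDist_lt (hne.image _)).1 hz).le

end InducedSubgraphs

section Decorrelation

open scoped Topology

open Metric Filter Asymptotics

lemma eventually_isZeroFree {V : Type*} [Fintype V] (G : SimpleGraph V) :
    ∀ᶠ z : ℂ in 𝓝 0, IsZeroFree G z :=
  eventually_all.2 fun A =>
    (differentiable_Z A).continuous.continuousAt.eventually_ne <| by
      simpa [map_Z] using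
        (map_ne_zero Complex.ofRealHom).2 (Z_pos (G := G) A (le_refl (0 : ℝ))).ne'

lemma vacancy_singleton_sub_isBigO {V : Type*} [Fintype V] {G : SimpleGraph V} {n : ℕ}
    {A B : Finset V} {v : V} (hAB : AgreeOnBall G v n A B) :
    (fun z : ℂ => vacancy G A {v} z - vacancy G B {v} z) =O[𝓝 0] fun z => z ^ n := by
  have hdeg : MaxDegLE G (Fintype.card V) := fun _ => card_le_univ _
  have hsmall : ∀ᶠ z : ℂ in 𝓝 0, ‖z‖ * 2 ^ (Fintype.card V + 1) < 1 :=
    ContinuousAt.eventually_lt (by fun_prop) continuousAt_const (by simp)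
  refine IsBigO.of_bound (4 * (4 * Fintype.card V * 2 ^ Fintype.card V) ^ n) ?_
  filter_upwards [eventually_isZeroFree G, hsmall] with z hz hzΔ
  calc ‖vacancy G A {v} z - vacancy G B {v} z‖
      ≤ 4 * (4 * Fintype.card V * 2 ^ Fintype.card V * ‖z‖) ^ n :=
        norm_vacancy_singleton_sub_le hz hdeg hzΔ.le hAB
    _ = 4 * (4 * Fintype.card V * 2 ^ Fintype.card V) ^ n * ‖z ^ n‖ := by
        rw [mul_pow, norm_pow, ← mul_assoc]

lemma norm_vacancy_singleton_le_schottkyBound {V : Type*} [Fintype V] {G : SimpleGraph V} {Δ : ℕ}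
    (hdeg : MaxDegLE G Δ) {l ρ : ℝ} (hρΔ : 2 * ρ * 2 ^ (Δ + 1) ≤ 1)
    (hzf : ∀ w ∈ thickening ρ ((↑) '' Set.Icc (0 : ℝ) l), IsZeroFree G (w : ℂ)) {z : ℂ}
    (hz : z ∈ thickening (ρ / 2) ((↑) '' Set.Icc (0 : ℝ) l)) (A : Finset V) (v : V) :
    ‖vacancy G A {v} z‖ ≤ schottkyBound 1 := by
  obtain ⟨_, ⟨x, hx, rfl⟩, hzx⟩ := mem_thickening_iff.1 hz
  have hρ : 0 < ρ := by linarith [dist_nonneg.trans_lt hzx]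
  have hball : ball (x : ℂ) ρ ⊆ thickening ρ ((↑) '' Set.Icc (0 : ℝ) l) :=
    ball_subset_thickening (Set.mem_image_of_mem _ hx) ρ
  have hzball : z ∈ ball (x : ℂ) ρ := mem_ball.2 (by linarith)
  have hzfz := hzf z (hball hzball)
  have hnorm_x : ‖(x : ℂ)‖ = x := by rw [Complex.norm_real, Real.norm_of_nonneg hx.1]
  by_cases hv : v ∈ A
  · rcases lt_or_ge x ρ with hxρ | hxρ
    · have hz_le : ‖z‖ ≤ 2 * ρ := by
        rw [dist_eq_norm] at hzx
        linarith [norm_le_norm_add_norm_sub' z x]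
      exact (norm_vacancy_singleton_le_two hzfz hdeg
        ((mul_le_mul_of_nonneg_right hz_le (by positivity)).trans hρΔ) A v).trans
          (two_le_schottkyBound zero_le_one)
    · have hne : ∀ w ∈ ball (x : ℂ) ρ, w ≠ 0 := by
        rintro _ hw rfl
        rw [mem_ball, dist_zero_left, hnorm_x] at hw
        linarith
      calc ‖vacancy G A {v} z‖ ≤ schottkyBound (dist z x / (ρ - dist z x)) :=
            norm_le_schottkyBound
              (fun w hw => (differentiableAt_vacancy (hzf w (hball hw)) A _).differentiableWithinAt)
              (fun w hw => vacancy_ne_zero (hzf w (hball hw)) A _)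
              (fun w hw => vacancy_singleton_ne_one (hzf w (hball hw)) (hne w hw) hv)
              (vacancy_mem_Icc A {v} hx.1) (map_vacancy Complex.ofRealHom A {v} x).symm hzball
        _ ≤ schottkyBound 1 := schottkyBound_mono <| by
            rw [div_le_one (by linarith)]
            linarith
  · rw [vacancy_of_disjoint hzfz (disjoint_singleton_right.2 hv), norm_one]
    exact one_le_two.trans (two_le_schottkyBound zero_le_one)

lemma exists_norm_vacancy_singleton_sub_le (Δ : ℕ) {l ε : ℝ} (hl : 0 < l) (hε : 0 < ε) :
    ∃ t ∈ Set.Ioo (0 : ℝ) 1, ∃ M > 0, ∀ (V : Type*) [Fintype V] (G : SimpleGraph V),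
      MaxDegLE G Δ → (∀ z ∈ thickening ε ((↑) '' Set.Icc (0 : ℝ) l), IsZeroFree G (z : ℂ)) →
      ∀ (A B : Finset V) (v : V) (n : ℕ), AgreeOnBall G v n A B →
        ‖vacancy G A {v} (l : ℂ) - vacancy G B {v} (l : ℂ)‖ ≤ M * t ^ n := by
  set ρ : ℝ := min ε (1 / (2 * 2 ^ (Δ + 1)))
  have hρ : 0 < ρ := lt_min hε (by positivity)
  have hρΔ : 2 * ρ * 2 ^ (Δ + 1) ≤ 1 := by
    have := (le_div_iff₀ (by positivity)).1 (min_le_right ε (1 / (2 * 2 ^ (Δ + 1))))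
    linarith
  obtain ⟨t, ht, hdecay⟩ := exists_norm_apply_le_mul_pow (E := ℂ) hl (half_pos hρ)
  refine ⟨t, ht, schottkyBound 1 + schottkyBound 1,
    by linarith [two_le_schottkyBound zero_le_one], fun V _ G hdeg hzf A B v n hAB => ?_⟩
  have hzfρ : ∀ z ∈ thickening ρ ((↑) '' Set.Icc (0 : ℝ) l), IsZeroFree G (z : ℂ) := fun z hz =>
    hzf z (thickening_mono (min_le_left _ _) _ hz)
  refine hdecay (fun z => vacancy G A {v} z - vacancy G B {v} z) _ n (fun z hz => ?_)
    (fun z hz => ?_) (vacancy_singleton_sub_isBigO hAB)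
  · have hz := hzfρ z (thickening_mono (half_le_self hρ.le) _ hz)
    exact ((differentiableAt_vacancy hz A _).sub
      (differentiableAt_vacancy hz B _)).differentiableWithinAt
  · exact (norm_sub_le _ _).trans (add_le_add
      (norm_vacancy_singleton_le_schottkyBound hdeg hρΔ hzfρ hz A v)
      (norm_vacancy_singleton_le_schottkyBound hdeg hρΔ hzfρ hz B v))

lemma abs_condProb_sub_condProb {V : Type*} [Fintype V] {G : SimpleGraph V} {Λ : Finset V}
    {σ τ : V → Bool} (hσ : IsBC G Λ σ) (hτ : IsBC G Λ τ) {x : ℝ} (hx : 0 < x) {v : V}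
    (hv : v ∉ Λ) :
    |condProb G x Λ σ v - condProb G x Λ τ v| =
      ‖vacancy G (goodSet G Λ σ) {v} (x : ℂ) - vacancy G (goodSet G Λ τ) {v} (x : ℂ)‖ := by
  rw [condProb_eq_one_sub_vacancy hσ hx hv, condProb_eq_one_sub_vacancy hτ hx hv,
    sub_sub_sub_cancel_left, abs_sub_comm, ← Real.norm_eq_abs, ← Complex.norm_real,
    Complex.ofReal_sub]
  congr 2 <;> exact map_vacancy Complex.ofRealHom _ _ _

theorem absence_of_zeros_implies_SSM_hardcore_general (Δ : ℕ) {lam ε : ℝ} (hlam : 0 < lam)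
    (hε : 0 < ε) :
    ∃ r > 1, ∃ C > 0, ∀ (V : Type*) [Fintype V] (G : SimpleGraph V), MaxDegLE G Δ →
      (∀ z ∈ thickening ε ((↑) '' Set.Icc (0 : ℝ) lam), IsZeroFree G (z : ℂ)) →
      SSM G lam C r := by
  obtain ⟨t, ⟨ht0, ht1⟩, M, hM, hdecay⟩ := exists_norm_vacancy_singleton_sub_le Δ hlam hε
  refine ⟨t⁻¹, (one_lt_inv₀ ht0).2 ht1, M / t, by positivity, ?_⟩
  intro V _ G hdeg hzf v Λ hv σ τ hσ hτ d hd
  rw [abs_condProb_sub_condProb hσ hτ hlam hv, inv_zpow', neg_neg, zpow_natCast]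
  calc _ ≤ M * t ^ (d - 1) := hdecay V G hdeg hzf _ _ v _ (agreeOnBall_goodSet hd)
    _ ≤ M * (t ^ d / t) := by
        gcongr
        rw [le_div_iff₀ ht0, ← pow_succ]
        exact pow_le_pow_of_le_one ht0.le ht1.le (by lia)
    _ = M / t * t ^ d := by ring

end Decorrelation

end HardCore

namespace HardCore

/-- Let `Δ ≥ 2` and let `𝒢 ⊆ 𝒢_Δ` be a family of graphs of maximum degree
at most `Δ` closed under taking induced subgraphs.  Suppose there are `λ* > 0` and `ε > 0`
such that `Z_G(λ) ≠ 0` for every `G ∈ 𝒢` and every `λ` in the `ε`-neighbourhood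
`𝒩([0,λ*), ε)` of `[0, λ*)` in `ℂ`.  Then for every `λ ∈ (0, λ*]` there exist `r > 1` and
`C > 0` such that the hard-core measure at `λ` satisfies strong spatial mixing on `𝒢` with
exponential rate `r` and constant `C`. -/
theorem absence_of_zeros_implies_SSM_hardcore
    (Δ : ℕ) (hΔ : 2 ≤ Δ)
    (𝒢 : ∀ s : Finset ℕ, SimpleGraph (Vtx s) → Prop)
    (hdeg : ∀ s G, 𝒢 s G → MaxDegLE G Δ)
    (hclosed : ClosedUnderInduced 𝒢)
    (lamStar ε : ℝ) (hlamStar : 0 < lamStar) (hε : 0 < ε)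
    (hzero : ∀ s G, 𝒢 s G → ∀ lam : ℂ,
      Metric.infDist lam ((fun x : ℝ => (x : ℂ)) '' Set.Ico 0 lamStar) ≤ ε →
      Z ℂ G Finset.univ lam ≠ 0)
    (lam : ℝ) (hlam : lam ∈ Set.Ioc 0 lamStar) :
    ∃ r > 1, ∃ C > 0, ∀ s G, 𝒢 s G → SSM G lam C r := by
  obtain ⟨r, hr, C, hC, hSSM⟩ := absence_of_zeros_implies_SSM_hardcore_general Δ hlam.1 hε
  exact ⟨r, hr, C, hC, fun s G hG => hSSM _ G (hdeg s G hG) fun z hz =>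
    hclosed.isZeroFree (fun s G hG => hzero s G hG z
      (infDist_ofReal_Ico_le_of_mem_thickening hlam hz)) hG⟩

end HardCore

end
end

section
/- Let q ≥ 2 be an integer, let A be a real symmetric q×q matrix, let G = (V,E) be a finite simple graph, let v ∈ V, i ∈ [q], and let σ and τ be two boundary conditions on a set Λ ⊆ V ∖ {v}, with d = d_G(v, σ≠τ). Then the rational functions z ↦ P^σ_{G,v,i;A}(z) and z ↦ P^τ_{G,v,i;A}(z) are holomorphic at z = 0 (their denominators at z = 0 equal q^{|V∖Λ|} ≠ 0), and their Taylor coefficients at z = 0 of every order ℓ with 0 ≤ ℓ ≤ d − 1 coincide. -/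
open Finset

noncomputable section

namespace GraphHom

open scoped Classical

variable {V : Type*} {q : ℕ}

/-- The weight of an (unordered) edge `e` under the coloring `ψ` and the matrix `B`.
For a symmetric matrix `B` and `e = {u,w}` this is exactly `B (ψ u) (ψ w)`. -/
def edgeWeight {R : Type*} [Field R] (B : Matrix (Fin q) (Fin q) R) (ψ : V → Fin q)
    (e : Sym2 V) : R :=
  Sym2.lift ⟨fun u w => (B (ψ u) (ψ w) + B (ψ w) (ψ u)) / 2, fun u w => by ring⟩ e

/-- The edges of `G` as a `Finset`. -/
def edges [Fintype V] (G : SimpleGraph V) : Finset (Sym2 V) :=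
  G.edgeSet.toFinite.toFinset

/-- The graph homomorphism partition function with boundary condition `σ` on `Λ`:
`Z^σ_G(B) = ∑_{ψ : V → [q], ψ|_Λ = σ|_Λ} ∏_{uv ∈ E} B_{ψ(u),ψ(v)}`. -/
def Zcond {R : Type*} [Field R] [Fintype V] (G : SimpleGraph V)
    (B : Matrix (Fin q) (Fin q) R) (Λ : Finset V) (σ : V → Fin q) : R :=
  ∑ ψ : V → Fin q, if ∀ u ∈ Λ, ψ u = σ u then ∏ e ∈ edges G, edgeWeight B ψ e else 0

/-- The interpolation matrix `J + z(A − J)`, i.e. the matrix with entries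
`1 + z(A_{ij} − 1)`, for a real matrix `A`. -/
def intMat (A : Matrix (Fin q) (Fin q) ℝ) (z : ℂ) : Matrix (Fin q) (Fin q) ℂ :=
  fun i j => 1 + z * ((A i j : ℂ) - 1)

/-- The ratio `P^σ_{G,v,i;A}(z) = Z^{σ_{v,i}}_G(J + z(A−J)) / Z^σ_G(J + z(A−J))`. -/
def ratio [Fintype V] (G : SimpleGraph V) (A : Matrix (Fin q) (Fin q) ℝ)
    (Λ : Finset V) (σ : V → Fin q) (v : V) (i : Fin q) (z : ℂ) : ℂ :=
  Zcond G (intMat A z) (insert v Λ) (Function.update σ v i) / Zcond G (intMat A z) Λ σ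

/-- The conditional probability `Pr_μ[Ψ(v) = i ∣ σ]` in the graph homomorphism measure
`μ_{G,A}`:  `Z^{σ_{v,i}}_G(A) / Z^σ_G(A)`. -/
def condProb [Fintype V] (G : SimpleGraph V) (A : Matrix (Fin q) (Fin q) ℝ)
    (Λ : Finset V) (σ : V → Fin q) (v : V) (i : Fin q) : ℝ :=
  Zcond G A (insert v Λ) (Function.update σ v i) / Zcond G A Λ σ

/-- `G` has maximum degree at most `Δ`. -/
def MaxDegLE [Fintype V] (G : SimpleGraph V) (Δ : ℕ) : Prop :=
  ∀ v : V, (univ.filter fun u => G.Adj v u).card ≤ Δ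

end GraphHom

namespace GraphHom
open scoped Classical

/-!
Write each edge weight at `J + z(A − J)` as `1 + z(a − 1)`. In the product of two partition
functions, a sum over pairs `(ψ, φ)` of colorings, the two weights of an edge multiply to
`1 + z b`, where `b` is symmetric in `ψ` and `φ`; expanding over the edges writes the product as a
sum over edge sets `F` of `z ^ |F|` times a coefficient.

Two ratios agree to order `d` at `0` as soon as their cross difference
`Z^{σ_{v,i}} Z^τ − Z^σ Z^{τ_{v,i}}` is divisible by `z ^ d`. If `|F| < d`, the component `C` of `v`
in `(V, F)` contains no vertex at which `σ` and `τ` differ. Exchanging `ψ` and `φ` on `C` moves the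
pin at `v` from one coloring to the other and keeps every `b` on `F`, because no edge of `F`
leaves `C`. So the two products have the same coefficient at `F`.
-/

section Extensions

variable {V κ : Type*} [Fintype V] [Fintype κ]

/-- The colorings of `V` that agree with the boundary condition `σ` on `Λ`. Only the values of `σ`
on `Λ` matter. -/
def extensions (Λ : Finset V) (σ : V → κ) : Finset (V → κ) :=
  {ψ | ∀ u ∈ Λ, ψ u = σ u}

lemma mem_extensions {Λ : Finset V} {σ ψ : V → κ} :
    ψ ∈ extensions Λ σ ↔ ∀ u ∈ Λ, ψ u = σ u := by
  simp [extensions]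

lemma extensions_eq_piFinset (Λ : Finset V) (σ : V → κ) :
    extensions Λ σ = Fintype.piFinset fun u => if u ∈ Λ then {σ u} else univ := by
  ext ψ
  rw [mem_extensions, Fintype.mem_piFinset]
  refine forall_congr' fun u => ?_
  by_cases hu : u ∈ Λ <;> simp [hu]

lemma card_extensions (Λ : Finset V) (σ : V → κ) :
    #(extensions Λ σ) = Fintype.card κ ^ #(univ \ Λ) := by
  have hcard (u : V) : #(if u ∈ Λ then {σ u} else (univ : Finset κ)) =
      if u ∈ univ \ Λ then Fintype.card κ else 1 := by
    by_cases hu : u ∈ Λ <;> simp [hu]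
  rw [extensions_eq_piFinset, Fintype.card_piFinset, prod_congr rfl fun u _ => hcard u,
    prod_ite_mem, univ_inter, prod_const]

end Extensions

section Swap

variable {V κ : Type*}

/-- Exchange two colorings on the vertex set `C`. -/
def swapOn (C : Set V) : Equiv.Perm ((V → κ) × (V → κ)) :=
  Function.Involutive.toPerm (fun p => (C.piecewise p.2 p.1, C.piecewise p.1 p.2)) fun p => by
    ext u <;> by_cases hu : u ∈ C <;> simp [hu]

variable {C : Set V} {u : V}

lemma swapOn_apply_of_mem (p : (V → κ) × (V → κ)) (hu : u ∈ C) :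
    (swapOn C p).1 u = p.2 u ∧ (swapOn C p).2 u = p.1 u :=
  ⟨Set.piecewise_eq_of_mem _ _ _ hu, Set.piecewise_eq_of_mem _ _ _ hu⟩

lemma swapOn_apply_of_notMem (p : (V → κ) × (V → κ)) (hu : u ∉ C) :
    (swapOn C p).1 u = p.1 u ∧ (swapOn C p).2 u = p.2 u :=
  ⟨Set.piecewise_eq_of_notMem _ _ _ hu, Set.piecewise_eq_of_notMem _ _ _ hu⟩

lemma swapOn_mem_extensions_iff [Fintype V] [Fintype κ] {Λ : Finset V} {σ τ : V → κ} {v : V}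
    (i : κ) (hv : v ∈ C) (hC : ∀ u ∈ Λ, u ∈ C → σ u = τ u) (p : (V → κ) × (V → κ)) :
    p ∈ extensions (insert v Λ) (Function.update σ v i) ×ˢ extensions Λ τ ↔
      swapOn C p ∈ extensions Λ σ ×ˢ extensions (insert v Λ) (Function.update τ v i) := by
  have hin := fun u (hu : u ∈ C) => swapOn_apply_of_mem p hu
  have hout := fun u (hu : u ∉ C) => swapOn_apply_of_notMem p hu
  simp only [mem_product, mem_extensions, mem_insert, Function.update_apply]
  grind

end Swap

section Component

variable {V : Type*}

lemma edist_le_card_of_reachable_fromEdgeSet {F : Finset (Sym2 V)} {u v : V}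
    (h : (SimpleGraph.fromEdgeSet (F : Set (Sym2 V))).Reachable u v) :
    (SimpleGraph.fromEdgeSet (F : Set (Sym2 V))).edist u v ≤ #F := by
  obtain ⟨p, hp⟩ := h.exists_isPath
  have hsub : (SimpleGraph.fromEdgeSet (F : Set (Sym2 V))).edgeFinset ⊆ F := fun e he => by
    rw [SimpleGraph.mem_edgeFinset, SimpleGraph.edgeSet_fromEdgeSet] at he
    exact he.1
  calc (SimpleGraph.fromEdgeSet (F : Set (Sym2 V))).edist u v
      ≤ p.length := SimpleGraph.edist_le p
    _ ≤ #F := by exact_mod_cast hp.isTrail.length_le_card_edgeFinset.trans (card_le_card hsub)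

lemma reachable_fromEdgeSet_of_mem {F : Set (Sym2 V)} {e : Sym2 V} (he : e ∈ F) {x y : V}
    (hx : x ∈ e) (hy : y ∈ e) : (SimpleGraph.fromEdgeSet F).Reachable x y := by
  obtain rfl | hne := eq_or_ne x y
  · rfl
  rw [(Sym2.mem_and_mem_iff hne).1 ⟨hx, hy⟩] at he
  exact ((SimpleGraph.fromEdgeSet_adj F).2 ⟨he, hne⟩).reachable

lemma fromEdgeSet_le_of_subset_edges [Fintype V] {G : SimpleGraph V} {F : Finset (Sym2 V)}
    (hF : F ⊆ edges G) : SimpleGraph.fromEdgeSet (F : Set (Sym2 V)) ≤ G := fun x y hxy => by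
  have hmem : s(x, y) ∈ edges G := hF ((SimpleGraph.fromEdgeSet_adj _).1 hxy).1
  simpa [edges] using hmem

end Component

section Expansion

variable {V K : Type*} {q : ℕ} [Field K]

/-- The matrix `J + z(A − J)` over an arbitrary field; `intMat` is its instance for a real matrix
and a complex parameter. -/
def interpolation (A : Matrix (Fin q) (Fin q) K) (z : K) : Matrix (Fin q) (Fin q) K :=
  fun i j => 1 + z * (A i j - 1)

/-- The quantity `b` for which the weights of the edge `e` under the two colorings of the pair `p`,
at the matrix `J + z(A − J)`, have product `1 + z b`. -/
def pairWeight (A : Matrix (Fin q) (Fin q) K) (z : K) (p : (V → Fin q) × (V → Fin q))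
    (e : Sym2 V) : K :=
  (edgeWeight A p.1 e - 1) + (edgeWeight A p.2 e - 1) +
    z * ((edgeWeight A p.1 e - 1) * (edgeWeight A p.2 e - 1))

lemma edgeWeight_congr (A : Matrix (Fin q) (Fin q) K) {ψ φ : V → Fin q} {e : Sym2 V}
    (h : ∀ u ∈ e, ψ u = φ u) : edgeWeight A ψ e = edgeWeight A φ e := by
  induction e with
  | _ x y => simp only [edgeWeight, Sym2.lift_mk, h x (Sym2.mem_mk_left x y),
      h y (Sym2.mem_mk_right x y)]

lemma pairWeight_swapOn (A : Matrix (Fin q) (Fin q) K) (z : K) (p : (V → Fin q) × (V → Fin q))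
    {C : Set V} {e : Sym2 V} (h : ∀ x ∈ e, ∀ y ∈ e, x ∈ C → y ∈ C) :
    pairWeight A z (swapOn C p) e = pairWeight A z p e := by
  by_cases hin : ∃ x ∈ e, x ∈ C
  · obtain ⟨x, hx, hxC⟩ := hin
    have hC := fun u hu => swapOn_apply_of_mem p (h x hx u hu hxC)
    rw [pairWeight, edgeWeight_congr A fun u hu => (hC u hu).1,
      edgeWeight_congr A fun u hu => (hC u hu).2, pairWeight]
    ring
  · have hC := fun u hu => swapOn_apply_of_notMem p fun huC => hin ⟨u, hu, huC⟩
    rw [pairWeight, edgeWeight_congr A fun u hu => (hC u hu).1,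
      edgeWeight_congr A fun u hu => (hC u hu).2, pairWeight]

lemma edgeWeight_interpolation [NeZero (2 : K)] (A : Matrix (Fin q) (Fin q) K) (z : K)
    (ψ : V → Fin q) (e : Sym2 V) :
    edgeWeight (interpolation A z) ψ e = 1 + z * (edgeWeight A ψ e - 1) := by
  induction e with
  | _ x y =>
    simp only [edgeWeight, interpolation, Sym2.lift_mk]
    field_simp
    ring

lemma edgeWeight_mul_edgeWeight [NeZero (2 : K)] (A : Matrix (Fin q) (Fin q) K) (z : K)
    (p : (V → Fin q) × (V → Fin q)) (e : Sym2 V) :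
    edgeWeight (interpolation A z) p.1 e * edgeWeight (interpolation A z) p.2 e =
      1 + z * pairWeight A z p e := by
  rw [edgeWeight_interpolation, edgeWeight_interpolation, pairWeight]
  ring

/-- The coefficient of `z ^ |F|` in the expansion of a product of two partition functions over edge
sets `F`: the sum over the pairs of colorings in `S` of the product of pair weights along `F`. It
still depends on `z` through the pair weights. -/
def pairCoeff (A : Matrix (Fin q) (Fin q) K) (F : Finset (Sym2 V))
    (S : Finset ((V → Fin q) × (V → Fin q))) (z : K) : K :=
  ∑ p ∈ S, ∏ e ∈ F, pairWeight A z p e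

lemma sum_prod_edgeWeight_mul [NeZero (2 : K)] (A : Matrix (Fin q) (Fin q) K)
    (E : Finset (Sym2 V)) (S : Finset ((V → Fin q) × (V → Fin q))) (z : K) :
    ∑ p ∈ S, (∏ e ∈ E, edgeWeight (interpolation A z) p.1 e) *
        ∏ e ∈ E, edgeWeight (interpolation A z) p.2 e =
      ∑ F ∈ E.powerset, z ^ #F * pairCoeff A F S z := by
  simp only [← prod_mul_distrib, edgeWeight_mul_edgeWeight, prod_one_add, pairCoeff, mul_sum]
  rw [sum_comm]
  simp only [prod_mul_distrib, prod_const]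

variable [Fintype V]

lemma Zcond_eq_sum_extensions (G : SimpleGraph V) (B : Matrix (Fin q) (Fin q) K)
    (Λ : Finset V) (σ : V → Fin q) :
    Zcond G B Λ σ = ∑ ψ ∈ extensions Λ σ, ∏ e ∈ edges G, edgeWeight B ψ e := by
  rw [Zcond, ← sum_filter]
  exact sum_congr (by ext ψ; simp [mem_extensions]) fun _ _ => rfl

lemma Zcond_interpolation_zero [NeZero (2 : K)] (G : SimpleGraph V)
    (A : Matrix (Fin q) (Fin q) K) (Λ : Finset V) (σ : V → Fin q) :
    Zcond G (interpolation A 0) Λ σ = (q : K) ^ #(univ \ Λ) := by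
  simp [Zcond_eq_sum_extensions, edgeWeight_interpolation, card_extensions]

lemma Zcond_mul_Zcond [NeZero (2 : K)] (G : SimpleGraph V) (A : Matrix (Fin q) (Fin q) K)
    (Λ Λ' : Finset V) (σ τ : V → Fin q) (z : K) :
    Zcond G (interpolation A z) Λ σ * Zcond G (interpolation A z) Λ' τ =
      ∑ F ∈ (edges G).powerset, z ^ #F * pairCoeff A F (extensions Λ σ ×ˢ extensions Λ' τ) z := by
  rw [← sum_prod_edgeWeight_mul, Zcond_eq_sum_extensions, Zcond_eq_sum_extensions, sum_mul_sum,
    sum_product]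

lemma pairCoeff_eq_of_card_lt (A : Matrix (Fin q) (Fin q) K) {G : SimpleGraph V} {v : V}
    (i : Fin q) {Λ : Finset V} {σ τ : V → Fin q} {d : ℕ}
    (hd : ∀ u ∈ Λ, σ u ≠ τ u → (d : ℕ∞) ≤ G.edist v u)
    {F : Finset (Sym2 V)} (hF : F ⊆ edges G) (hFd : #F < d) (z : K) :
    pairCoeff A F (extensions (insert v Λ) (Function.update σ v i) ×ˢ extensions Λ τ) z =
      pairCoeff A F (extensions Λ σ ×ˢ extensions (insert v Λ) (Function.update τ v i)) z := by
  let C : Set V := {u | (SimpleGraph.fromEdgeSet (F : Set (Sym2 V))).Reachable v u}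
  have hC : ∀ u ∈ Λ, u ∈ C → σ u = τ u := fun u hu huC => by
    by_contra hne
    have hdF : (d : ℕ∞) ≤ #F := calc
      (d : ℕ∞) ≤ G.edist v u := hd u hu hne
      _ ≤ (SimpleGraph.fromEdgeSet (F : Set (Sym2 V))).edist v u :=
        SimpleGraph.edist_anti (fromEdgeSet_le_of_subset_edges hF)
      _ ≤ #F := edist_le_card_of_reachable_fromEdgeSet huC
    exact hFd.not_ge (by exact_mod_cast hdF)
  have hclosed : ∀ e ∈ F, ∀ x ∈ e, ∀ y ∈ e, x ∈ C → y ∈ C := fun e he x hx y hy hxC =>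
    hxC.trans (reachable_fromEdgeSet_of_mem he hx hy)
  exact sum_equiv (swapOn C) (swapOn_mem_extensions_iff i (SimpleGraph.Reachable.refl v) hC)
    fun p _ => prod_congr rfl fun e he => (pairWeight_swapOn A z p (hclosed e he)).symm

/-- The ratio `Z^{σ_{v,i}}_G(B) / Z^σ_G(B)` over an arbitrary field. If `v ∈ Λ`, the numerator
overrides the value of `σ` at `v`. -/
def pinnedRatio (G : SimpleGraph V) (B : Matrix (Fin q) (Fin q) K) (Λ : Finset V)
    (σ : V → Fin q) (v : V) (i : Fin q) : K :=
  Zcond G B (insert v Λ) (Function.update σ v i) / Zcond G B Λ σ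

/-- The factor that remains when `z ^ d` is divided out of the cross difference of two pinned
ratios: only the edge sets with at least `d` edges contribute. -/
def crossQuotient (G : SimpleGraph V) (A : Matrix (Fin q) (Fin q) K) (Λ : Finset V)
    (σ τ : V → Fin q) (v : V) (i : Fin q) (d : ℕ) (z : K) : K :=
  ∑ F ∈ (edges G).powerset with d ≤ #F, z ^ (#F - d) *
    (pairCoeff A F (extensions (insert v Λ) (Function.update σ v i) ×ˢ extensions Λ τ) z -
      pairCoeff A F (extensions Λ σ ×ˢ extensions (insert v Λ) (Function.update τ v i)) z)

lemma Zcond_cross_sub_eq_pow_mul [NeZero (2 : K)] {G : SimpleGraph V}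
    (A : Matrix (Fin q) (Fin q) K) {v : V} (i : Fin q) {Λ : Finset V} {σ τ : V → Fin q} {d : ℕ}
    (hd : ∀ u ∈ Λ, σ u ≠ τ u → (d : ℕ∞) ≤ G.edist v u) (z : K) :
    Zcond G (interpolation A z) (insert v Λ) (Function.update σ v i) *
          Zcond G (interpolation A z) Λ τ -
        Zcond G (interpolation A z) Λ σ *
          Zcond G (interpolation A z) (insert v Λ) (Function.update τ v i) =
      z ^ d * crossQuotient G A Λ σ τ v i d z := by
  rw [Zcond_mul_Zcond, Zcond_mul_Zcond, ← sum_sub_distrib, crossQuotient, sum_filter, mul_sum]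
  refine sum_congr rfl fun F hF => ?_
  split_ifs with hFd
  · rw [← mul_sub, ← mul_assoc, ← pow_add, Nat.add_sub_cancel' hFd]
  · rw [pairCoeff_eq_of_card_lt A i hd (mem_powerset.1 hF) (not_le.1 hFd), sub_self, mul_zero]

end Expansion

section Analytic

variable {𝕜 : Type*} [NontriviallyNormedField 𝕜]

lemma iteratedDeriv_eq_of_sub_eventuallyEq_pow_smul [CharZero 𝕜] {E : Type*}
    [NormedAddCommGroup E] [NormedSpace 𝕜 E] [CompleteSpace E] {f g h : 𝕜 → E} {x : 𝕜} {d l : ℕ}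
    (hf : AnalyticAt 𝕜 f x) (hg : AnalyticAt 𝕜 g x) (hh : AnalyticAt 𝕜 h x)
    (hfg : ∀ᶠ z in nhds x, f z - g z = (z - x) ^ d • h z) (hl : l < d) :
    iteratedDeriv l f x = iteratedDeriv l g x := by
  have hfg_an := hf.fun_sub hg
  have horder : (d : ℕ∞) ≤ analyticOrderAt (fun z => f z - g z) x :=
    (natCast_le_analyticOrderAt hfg_an).2 ⟨h, hh, hfg⟩
  have hzero := (natCast_le_analyticOrderAt_iff_iteratedDeriv_eq_zero hfg_an).1 horder l hl
  rwa [iteratedDeriv_fun_sub hf.contDiffAt hg.contDiffAt, sub_eq_zero] at hzero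

variable {V : Type*} {q : ℕ}

@[fun_prop]
lemma analyticAt_pairCoeff (A : Matrix (Fin q) (Fin q) 𝕜) (F : Finset (Sym2 V))
    (S : Finset ((V → Fin q) × (V → Fin q))) (x : 𝕜) : AnalyticAt 𝕜 (pairCoeff A F S) x := by
  unfold pairCoeff pairWeight
  fun_prop

variable [Fintype V]

lemma analyticAt_crossQuotient (G : SimpleGraph V) (A : Matrix (Fin q) (Fin q) 𝕜)
    (Λ : Finset V) (σ τ : V → Fin q) (v : V) (i : Fin q) (d : ℕ) (x : 𝕜) :
    AnalyticAt 𝕜 (crossQuotient G A Λ σ τ v i d) x := by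
  unfold crossQuotient
  fun_prop

variable [CharZero 𝕜]

lemma analyticAt_Zcond_interpolation (G : SimpleGraph V) (A : Matrix (Fin q) (Fin q) 𝕜)
    (Λ : Finset V) (σ : V → Fin q) (x : 𝕜) :
    AnalyticAt 𝕜 (fun z => Zcond G (interpolation A z) Λ σ) x := by
  simp only [Zcond_eq_sum_extensions, edgeWeight_interpolation]
  fun_prop

lemma Zcond_interpolation_zero_ne_zero [NeZero q] (G : SimpleGraph V)
    (A : Matrix (Fin q) (Fin q) 𝕜) (Λ : Finset V) (σ : V → Fin q) :
    Zcond G (interpolation A 0) Λ σ ≠ 0 := by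
  rw [Zcond_interpolation_zero]
  exact pow_ne_zero _ (NeZero.ne _)

lemma eventually_Zcond_interpolation_ne_zero [NeZero q] (G : SimpleGraph V)
    (A : Matrix (Fin q) (Fin q) 𝕜) (Λ : Finset V) (σ : V → Fin q) :
    ∀ᶠ z in nhds 0, Zcond G (interpolation A z) Λ σ ≠ 0 :=
  (analyticAt_Zcond_interpolation G A Λ σ 0).continuousAt.eventually_ne
    (Zcond_interpolation_zero_ne_zero G A Λ σ)

lemma analyticAt_pinnedRatio [NeZero q] (G : SimpleGraph V) (A : Matrix (Fin q) (Fin q) 𝕜)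
    (Λ : Finset V) (σ : V → Fin q) (v : V) (i : Fin q) :
    AnalyticAt 𝕜 (fun z => pinnedRatio G (interpolation A z) Λ σ v i) 0 :=
  (analyticAt_Zcond_interpolation G A _ _ 0).fun_div (analyticAt_Zcond_interpolation G A Λ σ 0)
    (Zcond_interpolation_zero_ne_zero G A Λ σ)

lemma iteratedDeriv_pinnedRatio_eq [CompleteSpace 𝕜] [NeZero q] {G : SimpleGraph V}
    (A : Matrix (Fin q) (Fin q) 𝕜) {v : V} (i : Fin q) {Λ : Finset V} {σ τ : V → Fin q} {d l : ℕ}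
    (hd : ∀ u ∈ Λ, σ u ≠ τ u → (d : ℕ∞) ≤ G.edist v u) (hl : l < d) :
    iteratedDeriv l (fun z => pinnedRatio G (interpolation A z) Λ σ v i) 0 =
      iteratedDeriv l (fun z => pinnedRatio G (interpolation A z) Λ τ v i) 0 := by
  have hquotient : AnalyticAt 𝕜 (fun z => crossQuotient G A Λ σ τ v i d z /
      (Zcond G (interpolation A z) Λ σ * Zcond G (interpolation A z) Λ τ)) 0 :=
    (analyticAt_crossQuotient G A Λ σ τ v i d 0).fun_div
      ((analyticAt_Zcond_interpolation G A Λ σ 0).fun_mul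
        (analyticAt_Zcond_interpolation G A Λ τ 0))
      (mul_ne_zero (Zcond_interpolation_zero_ne_zero G A Λ σ)
        (Zcond_interpolation_zero_ne_zero G A Λ τ))
  refine iteratedDeriv_eq_of_sub_eventuallyEq_pow_smul (analyticAt_pinnedRatio G A Λ σ v i)
    (analyticAt_pinnedRatio G A Λ τ v i) hquotient ?_ hl
  filter_upwards [eventually_Zcond_interpolation_ne_zero G A Λ σ,
    eventually_Zcond_interpolation_ne_zero G A Λ τ] with z hσ hτ
  rw [pinnedRatio, pinnedRatio, div_sub_div _ _ hσ hτ, Zcond_cross_sub_eq_pow_mul A i hd, sub_zero,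
    smul_eq_mul, mul_div_assoc]

theorem hom_ratio_coeffs_agree_general [CompleteSpace 𝕜] (A : Matrix (Fin q) (Fin q) 𝕜)
    (G : SimpleGraph V) (v : V) (i : Fin q) (Λ : Finset V) (σ τ : V → Fin q) :
    Zcond G (interpolation A 0) Λ σ = (q : 𝕜) ^ #(univ \ Λ) ∧
    Zcond G (interpolation A 0) Λ τ = (q : 𝕜) ^ #(univ \ Λ) ∧
    AnalyticAt 𝕜 (fun z => pinnedRatio G (interpolation A z) Λ σ v i) 0 ∧
    AnalyticAt 𝕜 (fun z => pinnedRatio G (interpolation A z) Λ τ v i) 0 ∧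
    ∀ d : ℕ, (∀ u ∈ Λ, σ u ≠ τ u → (d : ℕ∞) ≤ G.edist v u) →
      ∀ l < d,
        iteratedDeriv l (fun z => pinnedRatio G (interpolation A z) Λ σ v i) 0 =
        iteratedDeriv l (fun z => pinnedRatio G (interpolation A z) Λ τ v i) 0 :=
  have : NeZero q := ⟨i.pos.ne'⟩
  ⟨Zcond_interpolation_zero G A Λ σ, Zcond_interpolation_zero G A Λ τ,
    analyticAt_pinnedRatio G A Λ σ v i, analyticAt_pinnedRatio G A Λ τ v i,
    fun _ hd _ hl => iteratedDeriv_pinnedRatio_eq A i hd hl⟩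

end Analytic

/-- Let `A` be a real symmetric `q × q` matrix, `G` a finite graph,
`v ∉ Λ`, `i ∈ [q]`, and `σ, τ` two boundary conditions on `Λ` with `d = d_G(v, σ≠τ)`.
Then `z ↦ P^σ_{G,v,i;A}(z)` and `z ↦ P^τ_{G,v,i;A}(z)` are holomorphic at `z = 0`
(their denominators at `z = 0` equal `q^{|V∖Λ|} ≠ 0`), and their Taylor coefficients at
`0` of every order `ℓ ≤ d − 1` coincide. -/
theorem hom_ratio_coeffs_agree {V : Type*} [Fintype V] (q : ℕ) (hq : 2 ≤ q)
    (A : Matrix (Fin q) (Fin q) ℝ) (hA : ∀ i j, A i j = A j i)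
    (G : SimpleGraph V) (v : V) (i : Fin q) (Λ : Finset V) (hv : v ∉ Λ)
    (σ τ : V → Fin q) :
    Zcond G (intMat A 0) Λ σ = (q : ℂ) ^ (Finset.univ \ Λ).card ∧
    Zcond G (intMat A 0) Λ τ = (q : ℂ) ^ (Finset.univ \ Λ).card ∧
    AnalyticAt ℂ (fun z : ℂ => ratio G A Λ σ v i z) 0 ∧
    AnalyticAt ℂ (fun z : ℂ => ratio G A Λ τ v i z) 0 ∧
    ∀ d : ℕ, (∀ u ∈ Λ, σ u ≠ τ u → (d : ℕ∞) ≤ G.edist v u) →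
      ∀ l < d,
        iteratedDeriv l (fun z : ℂ => ratio G A Λ σ v i z) 0 =
        iteratedDeriv l (fun z : ℂ => ratio G A Λ τ v i z) 0 := by
  exact hom_ratio_coeffs_agree_general (A.map Complex.ofReal) G v i Λ σ τ

end GraphHom

end
end
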